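/- Let d ≥ 1, let ω ∈ ℝ^d be nonresonant, let h : ℝ × ℝ^d → ℝ be real analytic and 2π-periodic in each of the last d coordinates, let h₀(x) = (2π)^{−d} ∫_{[0,2π]^d} h(x,ψ) dψ, and let c₀ ∈ ℝ satisfy h₀(c₀) = 0 and a := h₀'(c₀) ≠ 0. Then there exist ε̄ > 0 and ζ̄ > 0 such that for every ε with 0 < |ε| < ε̄ and every ζ with |ζ| < ζ̄ there exist a function u(·, ε, ζ) : ℝ^d → ℝ, real analytic and 2π-periodic in each coordinate with zero mean value, and a constant R(ε, ζ) ∈ ℝ, such that the function x(t) = c₀ + ζ + u(ωt, ε, ζ) satisfies ε x''(t) + x'(t) + ε h(x(t), ωt) = ε R(ε, ζ) for all t ∈ ℝ. -/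

import Mathlib

open MeasureTheory Filter

/-!
Pass to the torus `K` and let `D` be the derivative along the linear flow. Choose `μ₁, μ₂` with
`μ₁ + μ₂ = 1/ε` and `μ₁ μ₂ = a`. Then `D² + D/ε + a = (D + μ₁)(D + μ₂)`, so with `P` the projection
onto zero-mean functions and `N(u) = h(c₀ + ζ + u, ·)` the range equation becomes the fixed point
equation `u = -T P (N(u) - a u)`, where `T = (D + μ₁)⁻¹ (D + μ₂)⁻¹` is given by exponential averages
along the flow. Since `a ≠ 0`, `T` is bounded by `1/|a|` and no small divisors occur.

As `ε → 0` one has `|μ₂| → ∞` and `T → 0` strongly on zero-mean functions: nonresonance makes the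
derivatives along the flow dense there. For `g = ∂ₓh(c₀, ·) - a`, integration by parts gives
`(T P g)² → 0` in norm, so `1 + T P g` is invertible with a uniformly bounded inverse, and a
quasi-Newton argument yields a zero. Finally, translating a solution `U` by `θ` gives a solution of
an equation depending analytically on `θ`, so the implicit function theorem in `C(K, ℝ)` shows that
`U` is analytic.
-/

namespace RangeEquation

open Set Topology ContinuousMap

section ExponentialAverage

variable {E : Type*} [NormedAddCommGroup E] [NormedSpace ℝ E] {g : ℝ → E} {C : ℝ}

lemma integrableOn_exp_smul_Iic (hg : Continuous g) (hC : ∀ s, ‖g s‖ ≤ C) (b : ℝ) :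
    IntegrableOn (fun s => Real.exp s • g s) (Iic b) :=
  (integrableOn_exp_Iic b).smul_bdd C hg.aestronglyMeasurable (ae_of_all _ hC)

lemma integral_Ioi_comp_sub_left (g : ℝ → E) (t : ℝ) :
    ∫ s in Ioi 0, g (t - s) = ∫ s in Iic t, g s := by
  have hreflect := (Measure.measurePreserving_sub_left volume t).setIntegral_preimage_emb
    (Homeomorph.subLeft t).measurableEmbedding g (Iio t)
  rw [integral_Iic_eq_integral_Iio, ← hreflect, preimage_const_sub_Iio, sub_self]

lemma integral_exp_neg_smul_comp_sub (g : ℝ → E) (t : ℝ) :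
    ∫ s in Ioi 0, Real.exp (-s) • g (t - s) =
      Real.exp (-t) • ∫ s in Iic t, Real.exp s • g s := by
  rw [← integral_Ioi_comp_sub_left, ← integral_smul]
  refine integral_congr_ae (ae_of_all _ fun s => ?_)
  simp only [smul_smul, ← Real.exp_add]
  congr 2
  ring

lemma hasDerivAt_integral_Iic [CompleteSpace E] {f : ℝ → E} (hf : Continuous f)
    (hfi : ∀ b, IntegrableOn f (Iic b)) (t : ℝ) :
    HasDerivAt (fun τ => ∫ s in Iic τ, f s) (f t) t := by
  have hsplit : (fun τ => ∫ s in Iic τ, f s) = fun τ => (∫ s in Iic 0, f s) + ∫ s in 0..τ, f s := by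
    funext τ
    rw [← intervalIntegral.integral_Iic_sub_Iic (hfi 0) (hfi τ), add_sub_cancel]
  rw [hsplit]
  exact (hf.integral_hasStrictDerivAt 0 t).hasDerivAt.const_add _

lemma hasDerivAt_integral_exp_neg_smul_comp_sub [CompleteSpace E] (hg : Continuous g)
    (hC : ∀ s, ‖g s‖ ≤ C) (t : ℝ) :
    HasDerivAt (fun τ => ∫ s in Ioi 0, Real.exp (-s) • g (τ - s))
      (g t - ∫ s in Ioi 0, Real.exp (-s) • g (t - s)) t := by
  simp_rw [integral_exp_neg_smul_comp_sub g]
  have hexp : HasDerivAt (fun τ : ℝ => Real.exp (-τ)) (-Real.exp (-t)) t := by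
    simpa using (hasDerivAt_neg t).exp
  have hprimitive := hasDerivAt_integral_Iic (f := fun s => Real.exp s • g s) (by fun_prop)
    (integrableOn_exp_smul_Iic hg hC) t
  refine (hexp.smul hprimitive).congr_deriv ?_
  rw [smul_smul, ← Real.exp_add, neg_add_cancel, Real.exp_zero, one_smul, neg_smul, sub_eq_add_neg]

end ExponentialAverage

section Translation

variable {K : Type*} [TopologicalSpace K] [AddCommGroup K] [IsTopologicalAddGroup K]

/-- The translate `y ↦ f (y + θ)` of a continuous function on a topological group. -/
def translate {E : Type*} [TopologicalSpace E] (θ : K) (f : C(K, E)) : C(K, E) :=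
  ⟨fun y => f (y + θ), by fun_prop⟩

@[simp]
lemma translate_apply {E : Type*} [TopologicalSpace E] (θ : K) (f : C(K, E)) (y : K) :
    translate θ f y = f (y + θ) :=
  rfl

@[simp]
lemma translate_add (θ : K) (f g : C(K, ℝ)) : translate θ (f + g) = translate θ f + translate θ g :=
  rfl

@[simp]
lemma translate_smul (θ : K) (c : ℝ) (f : C(K, ℝ)) : translate θ (c • f) = c • translate θ f :=
  rfl

lemma continuous_translate {E : Type*} [TopologicalSpace E] (f : C(K, E)) :
    Continuous fun θ : K => translate θ f :=
  (ContinuousMap.curry ⟨fun p : K × K => f (p.2 + p.1), by fun_prop⟩).continuous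

lemma norm_translate_le {E : Type*} [NormedAddCommGroup E] [CompactSpace K] (θ : K)
    (f : C(K, E)) : ‖translate θ f‖ ≤ ‖f‖ :=
  (ContinuousMap.norm_le _ (norm_nonneg f)).2 fun y => f.norm_coe_le_norm (y + θ)

end Translation

section FlowDerivative

variable {K : Type*} [TopologicalSpace K] [AddCommGroup K] {E : Type*} [NormedAddCommGroup E]
  [NormedSpace ℝ E] {φ : ℝ →ₜ+ K} {f f' g g' : C(K, E)}

/-- `f'` is the derivative of `f` along the flow `y ↦ y + φ t` of a one-parameter subgroup `φ`;
on the torus with `φ t = t ω` this reads `f' = ω · ∇f`. -/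
def HasFlowDeriv (φ : ℝ →ₜ+ K) (f f' : C(K, E)) : Prop :=
  ∀ y t, HasDerivAt (fun s => f (y + φ s)) (f' (y + φ t)) t

namespace HasFlowDeriv

lemma add (hf : HasFlowDeriv φ f f') (hg : HasFlowDeriv φ g g') :
    HasFlowDeriv φ (f + g) (f' + g') :=
  fun y t => (hf y t).add (hg y t)

lemma sub (hf : HasFlowDeriv φ f f') (hg : HasFlowDeriv φ g g') :
    HasFlowDeriv φ (f - g) (f' - g') :=
  fun y t => (hf y t).sub (hg y t)

lemma const_smul {𝕜 : Type*} [NormedField 𝕜] [NormedSpace 𝕜 E] [SMulCommClass ℝ 𝕜 E]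
    (c : 𝕜) (hf : HasFlowDeriv φ f f') : HasFlowDeriv φ (c • f) (c • f') :=
  fun y t => (hf y t).const_smul c

lemma mul {f f' g g' : C(K, ℝ)} (hf : HasFlowDeriv φ f f') (hg : HasFlowDeriv φ g g') :
    HasFlowDeriv φ (f * g) (f' * g + f * g') :=
  fun y t => (hf y t).mul (hg y t)

lemma continuousLinearMap_comp {F : Type*} [NormedAddCommGroup F] [NormedSpace ℝ F]
    (L : E →L[ℝ] F) (hf : HasFlowDeriv φ f f') :
    HasFlowDeriv φ ((L : C(E, F)).comp f) ((L : C(E, F)).comp f') :=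
  fun y t => L.hasFDerivAt.comp_hasDerivAt t (hf y t)

-- At a maximum point of `|v|` the flow derivative of `v` vanishes, so there `μ v = f`.
lemma norm_le_div_abs [CompactSpace K] {f v : C(K, ℝ)} {μ : ℝ} (hμ : μ ≠ 0)
    (h : HasFlowDeriv φ v (f - μ • v)) : ‖v‖ ≤ ‖f‖ / |μ| := by
  have hμ_pos : 0 < |μ| := abs_pos.mpr hμ
  obtain ⟨y, -, hy⟩ := isCompact_univ.exists_isMaxOn (univ_nonempty (α := K))
    (f := fun y => v y ^ 2) (by fun_prop)
  have hmax : IsLocalMax (fun s => v (y + φ s) ^ 2) 0 :=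
    Eventually.of_forall fun s => by simpa using hy (mem_univ (y + φ s))
  have hcritical : v y = 0 ∨ f y - μ * v y = 0 := by
    simpa using hmax.hasDerivAt_eq_zero ((h y 0).pow 2)
  have hbound : |v y| ≤ ‖f‖ / |μ| := by
    rcases hcritical with hzero | heq
    · rw [hzero, abs_zero]
      positivity
    · rw [le_div_iff₀ hμ_pos, mul_comm, ← abs_mul, ← sub_eq_zero.mp heq]
      exact f.norm_coe_le_norm y
  exact (ContinuousMap.norm_le _ (by positivity)).2 fun z =>
    (sq_le_sq.mp (hy (mem_univ z))).trans hbound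

lemma unique_of_add_smul [CompactSpace K] {f v w : C(K, ℝ)} {μ : ℝ} (hμ : μ ≠ 0)
    (hv : HasFlowDeriv φ v (f - μ • v)) (hw : HasFlowDeriv φ w (f - μ • w)) : v = w := by
  have hdiff : HasFlowDeriv φ (v - w) (0 - μ • (v - w)) := by
    convert hv.sub hw using 1
    module
  simpa [sub_eq_zero] using hdiff.norm_le_div_abs hμ

end HasFlowDeriv

end FlowDerivative

section Resolvent

variable {K : Type*} [TopologicalSpace K] [AddCommGroup K] [IsTopologicalAddGroup K]
  [CompactSpace K] (φ : ℝ →ₜ+ K)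

lemma integrable_exp_neg_smul_translate (μ : ℝ) (f : C(K, ℝ)) :
    IntegrableOn (fun s => Real.exp (-s) • translate (-φ (s / μ)) f) (Ioi 0) := by
  have hcont : Continuous fun s => translate (-φ (s / μ)) f :=
    (continuous_translate f).comp (by fun_prop)
  exact (integrableOn_exp_neg_Ioi 0).smul_bdd ‖f‖ hcont.aestronglyMeasurable
    (ae_of_all _ fun s => norm_translate_le _ f)

lemma norm_integral_exp_neg_smul_translate_le (μ : ℝ) (f : C(K, ℝ)) :
    ‖∫ s in Ioi 0, Real.exp (-s) • translate (-φ (s / μ)) f‖ ≤ ‖f‖ := by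
  calc ‖∫ s in Ioi 0, Real.exp (-s) • translate (-φ (s / μ)) f‖
      ≤ ∫ s in Ioi 0, Real.exp (-s) * ‖f‖ :=
        norm_integral_le_of_norm_le ((integrableOn_exp_neg_Ioi 0).mul_const _) <|
          ae_of_all _ fun s => by
            rw [norm_smul, Real.norm_of_nonneg (Real.exp_pos _).le]
            gcongr
            exact norm_translate_le _ f
    _ = ‖f‖ := by rw [integral_mul_const, integral_exp_neg_Ioi_zero, one_mul]

/-- The resolvent `(D + μ)⁻¹` of the derivative `D` along the flow `φ`. Scaling the time by `μ` in
`∫₀^∞ exp (-μ s) f (y - φ s) ds` gives one formula for both signs of `μ`. For `μ = 0`, where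
`D + μ` is not invertible, the value is `0`. -/
noncomputable def resolvent (μ : ℝ) : C(K, ℝ) →L[ℝ] C(K, ℝ) :=
  LinearMap.mkContinuous
    { toFun f := μ⁻¹ • ∫ s in Ioi 0, Real.exp (-s) • translate (-φ (s / μ)) f
      map_add' f g := by
        simp only [translate_add, smul_add]
        rw [integral_add (integrable_exp_neg_smul_translate φ μ f)
          (integrable_exp_neg_smul_translate φ μ g), smul_add]
      map_smul' c f := by
        simp only [translate_smul, smul_comm _ c, integral_smul, RingHom.id_apply] }
    |μ|⁻¹ fun f => by
      rw [LinearMap.coe_mk, AddHom.coe_mk, norm_smul, norm_inv, Real.norm_eq_abs]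
      gcongr
      exact norm_integral_exp_neg_smul_translate_le φ μ f

lemma norm_resolvent_apply_le (μ : ℝ) (f : C(K, ℝ)) : ‖resolvent φ μ f‖ ≤ ‖f‖ / |μ| := by
  rw [div_eq_inv_mul]
  exact (resolvent φ μ).le_of_opNorm_le (LinearMap.mkContinuous_norm_le _ (by positivity) _) f

lemma resolvent_apply (μ : ℝ) (f : C(K, ℝ)) (y : K) :
    resolvent φ μ f y = μ⁻¹ * ∫ s in Ioi 0, Real.exp (-s) • f (y - φ (s / μ)) := by
  change (μ⁻¹ • ∫ s in Ioi 0, Real.exp (-s) • translate (-φ (s / μ)) f) y = _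
  rw [ContinuousMap.smul_apply,
    ContinuousMap.integral_apply (integrable_exp_neg_smul_translate φ μ f)]
  simp [sub_eq_add_neg]

lemma translate_resolvent (μ : ℝ) (f : C(K, ℝ)) (θ : K) :
    translate θ (resolvent φ μ f) = resolvent φ μ (translate θ f) := by
  ext y
  simp [resolvent_apply, sub_add_eq_add_sub]

lemma hasFlowDeriv_resolvent {μ : ℝ} (hμ : μ ≠ 0) (f : C(K, ℝ)) :
    HasFlowDeriv φ (resolvent φ μ f) (f - μ • resolvent φ μ f) := by
  intro y t
  have horbit : ∀ s, resolvent φ μ f (y + φ s) =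
      μ⁻¹ * ∫ r in Ioi 0, Real.exp (-r) • f (y + φ ((μ * s - r) / μ)) := fun s => by
    simp only [resolvent_apply, sub_div, mul_div_cancel_left₀ s hμ, map_sub, add_sub_assoc]
  have haverage := hasDerivAt_integral_exp_neg_smul_comp_sub
    (g := fun r => f (y + φ (r / μ))) (by fun_prop) (fun r => f.norm_coe_le_norm _) (μ * t)
  have hrescaled := (haverage.comp t ((hasDerivAt_id t).const_mul μ)).const_mul μ⁻¹
  rw [funext horbit]
  refine hrescaled.congr_deriv ?_
  simp only [ContinuousMap.sub_apply, ContinuousMap.smul_apply, horbit, smul_eq_mul,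
    mul_div_cancel_left₀ t hμ]
  field_simp

variable {φ}

lemma HasFlowDeriv.eq_resolvent {μ : ℝ} (hμ : μ ≠ 0) {f v : C(K, ℝ)}
    (hv : HasFlowDeriv φ v (f - μ • v)) : v = resolvent φ μ f :=
  hv.unique_of_add_smul hμ (hasFlowDeriv_resolvent φ hμ f)

lemma resolvent_comm {μ ν : ℝ} (hμ : μ ≠ 0) (hν : ν ≠ 0) (f : C(K, ℝ)) :
    resolvent φ μ (resolvent φ ν f) = resolvent φ ν (resolvent φ μ f) := by
  have hinner := hasFlowDeriv_resolvent φ hν f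
  have houter := hasFlowDeriv_resolvent φ hμ (resolvent φ ν f)
  -- the resolvent identity
  have hidentity : resolvent φ ν f + (ν - μ) • resolvent φ μ (resolvent φ ν f) =
      resolvent φ μ f := by
    refine HasFlowDeriv.eq_resolvent hμ ?_
    convert hinner.add (houter.const_smul (ν - μ)) using 1
    module
  refine HasFlowDeriv.eq_resolvent hν ?_
  convert houter using 1
  rw [← hidentity]
  module

lemma HasFlowDeriv.resolvent_deriv {μ : ℝ} (hμ : μ ≠ 0) {f f' : C(K, ℝ)}
    (hf : HasFlowDeriv φ f f') : resolvent φ μ f' = f - μ • resolvent φ μ f :=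
  (HasFlowDeriv.eq_resolvent hμ (hf.sub ((hasFlowDeriv_resolvent φ hμ f).const_smul μ))).symm

lemma norm_smul_resolvent_apply_le {μ : ℝ} (hμ : μ ≠ 0) (f : C(K, ℝ)) :
    ‖μ • resolvent φ μ f‖ ≤ ‖f‖ := by
  rw [norm_smul, Real.norm_eq_abs, mul_comm, ← le_div_iff₀ (abs_pos.2 hμ)]
  exact norm_resolvent_apply_le φ μ f

lemma HasFlowDeriv.norm_resolvent_deriv_le {μ : ℝ} (hμ : μ ≠ 0) {f f' : C(K, ℝ)}
    (hf : HasFlowDeriv φ f f') : ‖resolvent φ μ f'‖ ≤ 2 * ‖f‖ := by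
  rw [hf.resolvent_deriv hμ, two_mul]
  exact (norm_sub_le _ _).trans (by gcongr; exact norm_smul_resolvent_apply_le hμ f)

end Resolvent

section Mean

section Functional

variable {K : Type*} [TopologicalSpace K] [CompactSpace K] [MeasurableSpace K] [BorelSpace K]
  (𝕜 : Type*) [RCLike 𝕜] (m : Measure K) [IsProbabilityMeasure m]

/-- The mean value `∫ f dm` as a continuous linear functional on `C(K, 𝕜)`. -/
noncomputable def mean : C(K, 𝕜) →L[𝕜] 𝕜 :=
  LinearMap.mkContinuous
    { toFun f := ∫ y, f y ∂m
      map_add' f g := integral_add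
        (f.continuous.integrable_of_hasCompactSupport (.of_compactSpace f))
        (g.continuous.integrable_of_hasCompactSupport (.of_compactSpace g))
      map_smul' c f := integral_const_mul c _ }
    1 fun f => by
      simpa using norm_integral_le_of_norm_le_const (μ := m) (ae_of_all _ f.norm_coe_le_norm)

lemma mean_apply (f : C(K, 𝕜)) : mean 𝕜 m f = ∫ y, f y ∂m :=
  rfl

@[simp]
lemma mean_one : mean 𝕜 m 1 = 1 := by
  simp [mean_apply]

lemma norm_mean_le (f : C(K, 𝕜)) : ‖mean 𝕜 m f‖ ≤ ‖f‖ := by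
  simpa [mean_apply] using norm_integral_le_of_norm_le_const (μ := m)
    (ae_of_all _ f.norm_coe_le_norm)

/-- The projection `f ↦ f - ∫ f dm` of `C(K, 𝕜)` onto the functions of zero mean; the range equation
is the image of the full equation under it. -/
noncomputable def zeroMeanProj : C(K, 𝕜) →L[𝕜] C(K, 𝕜) :=
  ContinuousLinearMap.id 𝕜 _ - (mean 𝕜 m).smulRight 1

lemma zeroMeanProj_apply (f : C(K, 𝕜)) : zeroMeanProj 𝕜 m f = f - mean 𝕜 m f • (1 : C(K, 𝕜)) :=
  rfl

variable {𝕜}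

@[simp]
lemma mean_zeroMeanProj (f : C(K, 𝕜)) : mean 𝕜 m (zeroMeanProj 𝕜 m f) = 0 := by
  simp [zeroMeanProj_apply]

variable {m} in
lemma zeroMeanProj_of_mean_eq_zero {f : C(K, 𝕜)} (hf : mean 𝕜 m f = 0) :
    zeroMeanProj 𝕜 m f = f := by
  simp [zeroMeanProj_apply, hf]

lemma norm_zeroMeanProj_le (f : C(K, 𝕜)) : ‖zeroMeanProj 𝕜 m f‖ ≤ 2 * ‖f‖ := by
  have hone : ‖(1 : C(K, 𝕜))‖ ≤ 1 := (ContinuousMap.norm_le _ zero_le_one).2 fun y => by simp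
  calc ‖zeroMeanProj 𝕜 m f‖ ≤ ‖f‖ + ‖mean 𝕜 m f‖ * ‖(1 : C(K, 𝕜))‖ := by
        rw [← norm_smul]
        exact norm_sub_le _ _
    _ ≤ ‖f‖ + ‖f‖ * 1 := by
        gcongr
        exact norm_mean_le 𝕜 m f
    _ = 2 * ‖f‖ := by ring

end Functional

section Invariance

variable {K : Type*} [TopologicalSpace K] [AddCommGroup K] [IsTopologicalAddGroup K]
  [CompactSpace K] [MeasurableSpace K] [BorelSpace K] {𝕜 : Type*} [RCLike 𝕜] (m : Measure K)
  [IsProbabilityMeasure m] [m.IsAddLeftInvariant]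

@[simp]
lemma mean_translate (f : C(K, 𝕜)) (θ : K) : mean 𝕜 m (translate θ f) = mean 𝕜 m f :=
  integral_add_right_eq_self (fun y => f y) θ

lemma translate_zeroMeanProj (f : C(K, ℝ)) (θ : K) :
    translate θ (zeroMeanProj ℝ m f) = zeroMeanProj ℝ m (translate θ f) := by
  rw [zeroMeanProj_apply, zeroMeanProj_apply, mean_translate]
  rfl

variable {m} in
-- The mean of `f` along the flow is constant in time, with derivative the mean of `f'`.
lemma HasFlowDeriv.mean_eq_zero {φ : ℝ →ₜ+ K} {f f' : C(K, 𝕜)} (hf : HasFlowDeriv φ f f') :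
    mean 𝕜 m f' = 0 := by
  have hderiv : HasDerivAt (fun t => ∫ y, f (y + φ t) ∂m) (∫ y, f' (y + φ 0) ∂m) 0 :=
    (hasDerivAt_integral_of_dominated_loc_of_deriv_le (bound := fun _ => ‖f'‖) univ_mem
      (.of_forall fun t => (translate (φ t) f).continuous.aestronglyMeasurable)
      ((translate (φ 0) f).continuous.integrable_of_hasCompactSupport (.of_compactSpace _))
      (translate (φ 0) f').continuous.aestronglyMeasurable
      (ae_of_all _ fun y t _ => f'.norm_coe_le_norm _) (integrable_const _)
      (ae_of_all _ fun y t _ => hf y t)).2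
  have hconst : (fun t => ∫ y, f (y + φ t) ∂m) = fun _ => mean 𝕜 m f :=
    funext fun t => mean_translate m f (φ t)
  rw [hconst] at hderiv
  simpa [mean_apply] using hderiv.unique (hasDerivAt_const _ _)

end Invariance

end Mean

section Green

variable {K : Type*} [TopologicalSpace K] [AddCommGroup K] [IsTopologicalAddGroup K]
  [CompactSpace K] (φ : ℝ →ₜ+ K)

/-- The inverse of the second order operator `(D + μ₁) (D + μ₂)`, with `D` the derivative along the
flow `φ`. -/
noncomputable def green (μ₁ μ₂ : ℝ) : C(K, ℝ) →L[ℝ] C(K, ℝ) :=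
  resolvent φ μ₁ ∘L resolvent φ μ₂

variable {φ} {μ₁ μ₂ : ℝ}

lemma norm_green_apply_le (f : C(K, ℝ)) : ‖green φ μ₁ μ₂ f‖ ≤ ‖f‖ / |μ₁ * μ₂| := by
  calc ‖green φ μ₁ μ₂ f‖ ≤ ‖resolvent φ μ₂ f‖ / |μ₁| := norm_resolvent_apply_le φ μ₁ _
    _ ≤ ‖f‖ / |μ₂| / |μ₁| := by
        gcongr
        exact norm_resolvent_apply_le φ μ₂ f
    _ = ‖f‖ / |μ₁ * μ₂| := by rw [div_div, ← abs_mul, mul_comm]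

lemma hasFlowDeriv_green (hμ₁ : μ₁ ≠ 0) (f : C(K, ℝ)) :
    HasFlowDeriv φ (green φ μ₁ μ₂ f) (resolvent φ μ₂ f - μ₁ • green φ μ₁ μ₂ f) :=
  hasFlowDeriv_resolvent φ hμ₁ _

lemma norm_flowDeriv_green_le (hμ₁ : μ₁ ≠ 0) (f : C(K, ℝ)) :
    ‖resolvent φ μ₂ f - μ₁ • green φ μ₁ μ₂ f‖ ≤ 2 * (‖f‖ / |μ₂|) := by
  calc ‖resolvent φ μ₂ f - μ₁ • green φ μ₁ μ₂ f‖
      ≤ ‖resolvent φ μ₂ f‖ + ‖resolvent φ μ₂ f‖ :=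
        (norm_sub_le _ _).trans (by gcongr; exact norm_smul_resolvent_apply_le hμ₁ _)
    _ ≤ 2 * (‖f‖ / |μ₂|) := by
        rw [← two_mul]
        gcongr
        exact norm_resolvent_apply_le φ μ₂ f

lemma hasFlowDeriv_flowDeriv_green (hμ₁ : μ₁ ≠ 0) (hμ₂ : μ₂ ≠ 0) (f : C(K, ℝ)) :
    HasFlowDeriv φ (resolvent φ μ₂ f - μ₁ • green φ μ₁ μ₂ f)
      (f - (μ₁ + μ₂) • (resolvent φ μ₂ f - μ₁ • green φ μ₁ μ₂ f) -
        (μ₁ * μ₂) • green φ μ₁ μ₂ f) := by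
  convert (hasFlowDeriv_resolvent φ hμ₂ f).sub ((hasFlowDeriv_green hμ₁ f).const_smul μ₁) using 1
  module

lemma HasFlowDeriv.norm_green_deriv_le (hμ₁ : μ₁ ≠ 0) (hμ₂ : μ₂ ≠ 0) {f f' : C(K, ℝ)}
    (hf : HasFlowDeriv φ f f') : ‖green φ μ₁ μ₂ f'‖ ≤ 2 * ‖f‖ / |μ₂| := by
  rw [green, ContinuousLinearMap.comp_apply, resolvent_comm hμ₁ hμ₂]
  refine (norm_resolvent_apply_le φ μ₂ _).trans ?_
  gcongr
  exact hf.norm_resolvent_deriv_le hμ₁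

end Green

section RangeSolver

variable {K : Type*} [TopologicalSpace K] [AddCommGroup K] [IsTopologicalAddGroup K]
  [CompactSpace K] [MeasurableSpace K] [BorelSpace K] (φ : ℝ →ₜ+ K) (m : Measure K)
  [IsProbabilityMeasure m]

/-- The operator taking `f` to the solution `v` of `(D + μ₁) (D + μ₂) v = f - ∫ f dm`, with `D` the
derivative along the flow `φ`. -/
noncomputable def rangeSolver (μ₁ μ₂ : ℝ) : C(K, ℝ) →L[ℝ] C(K, ℝ) :=
  green φ μ₁ μ₂ ∘L zeroMeanProj ℝ m

variable {μ₁ μ₂ : ℝ}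

lemma norm_rangeSolver_le : ‖rangeSolver φ m μ₁ μ₂‖ ≤ 2 / |μ₁ * μ₂| := by
  refine ContinuousLinearMap.opNorm_le_bound _ (by positivity) fun f => ?_
  calc ‖green φ μ₁ μ₂ (zeroMeanProj ℝ m f)‖ ≤ ‖zeroMeanProj ℝ m f‖ / |μ₁ * μ₂| :=
        norm_green_apply_le _
    _ ≤ 2 * ‖f‖ / |μ₁ * μ₂| := by
        gcongr
        exact norm_zeroMeanProj_le m f
    _ = 2 / |μ₁ * μ₂| * ‖f‖ := by ring

lemma norm_rangeSolver_apply_le (f : C(K, ℝ)) :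
    ‖rangeSolver φ m μ₁ μ₂ f‖ ≤ 2 / |μ₁ * μ₂| * ‖f‖ :=
  (rangeSolver φ m μ₁ μ₂).le_of_opNorm_le (norm_rangeSolver_le φ m) f

lemma norm_rangeSolver_comp_mul_comp_green_le (g : C(K, ℝ)) :
    ‖rangeSolver φ m μ₁ μ₂ ∘L .mul ℝ C(K, ℝ) g ∘L green φ μ₁ μ₂‖ ≤ 2 / |μ₁ * μ₂| ^ 2 * ‖g‖ := by
  refine ContinuousLinearMap.opNorm_le_bound _ (by positivity) fun f => ?_
  calc ‖rangeSolver φ m μ₁ μ₂ (g * green φ μ₁ μ₂ f)‖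
      ≤ 2 / |μ₁ * μ₂| * (‖g‖ * (‖f‖ / |μ₁ * μ₂|)) := by
        refine (norm_rangeSolver_apply_le φ m _).trans ?_
        gcongr
        exact (norm_mul_le _ _).trans (by gcongr; exact norm_green_apply_le f)
    _ = 2 / |μ₁ * μ₂| ^ 2 * ‖g‖ * ‖f‖ := by ring

variable [m.IsAddLeftInvariant]

lemma translate_rangeSolver (f : C(K, ℝ)) (θ : K) :
    translate θ (rangeSolver φ m μ₁ μ₂ f) = rangeSolver φ m μ₁ μ₂ (translate θ f) := by
  simp only [rangeSolver, green, ContinuousLinearMap.comp_apply, translate_resolvent,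
    translate_zeroMeanProj]

variable {φ m}

lemma mean_resolvent {μ : ℝ} (hμ : μ ≠ 0) (f : C(K, ℝ)) :
    mean ℝ m (resolvent φ μ f) = mean ℝ m f / μ := by
  have hmean := (hasFlowDeriv_resolvent φ hμ f).mean_eq_zero (m := m)
  rw [map_sub, map_smul, smul_eq_mul, sub_eq_zero] at hmean
  rw [hmean, mul_div_cancel_left₀ _ hμ]

lemma mean_rangeSolver (hμ₁ : μ₁ ≠ 0) (hμ₂ : μ₂ ≠ 0) (f : C(K, ℝ)) :
    mean ℝ m (rangeSolver φ m μ₁ μ₂ f) = 0 := by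
  simp only [rangeSolver, green, ContinuousLinearMap.comp_apply, mean_resolvent hμ₁,
    mean_resolvent hμ₂, mean_zeroMeanProj, zero_div]

lemma HasFlowDeriv.norm_rangeSolver_deriv_le (hμ₁ : μ₁ ≠ 0) (hμ₂ : μ₂ ≠ 0) {f f' : C(K, ℝ)}
    (hf : HasFlowDeriv φ f f') : ‖rangeSolver φ m μ₁ μ₂ f'‖ ≤ 2 * ‖f‖ / |μ₂| := by
  rw [rangeSolver, ContinuousLinearMap.comp_apply, zeroMeanProj_of_mean_eq_zero hf.mean_eq_zero]
  exact hf.norm_green_deriv_le hμ₁ hμ₂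

-- Integration by parts: with `v = green f`, write `g' v = (g v)' - g v'` and gain `1 / |μ₂|` from
-- both terms.
lemma HasFlowDeriv.norm_rangeSolver_comp_mul_deriv_comp_green_le (hμ₁ : μ₁ ≠ 0) (hμ₂ : μ₂ ≠ 0)
    {g g' : C(K, ℝ)} (hg : HasFlowDeriv φ g g') :
    ‖rangeSolver φ m μ₁ μ₂ ∘L .mul ℝ C(K, ℝ) g' ∘L green φ μ₁ μ₂‖ ≤
      6 * ‖g‖ / |μ₁ * μ₂| / |μ₂| := by
  refine ContinuousLinearMap.opNorm_le_bound _ (by positivity) fun f => ?_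
  set v := green φ μ₁ μ₂ f
  set v' := resolvent φ μ₂ f - μ₁ • v
  have hgv : HasFlowDeriv φ (g * v) (g' * v + g * v') := hg.mul (hasFlowDeriv_green hμ₁ f)
  have hv_le : ‖v‖ ≤ ‖f‖ / |μ₁ * μ₂| := norm_green_apply_le f
  have hv'_le : ‖v'‖ ≤ 2 * (‖f‖ / |μ₂|) := norm_flowDeriv_green_le hμ₁ f
  calc ‖rangeSolver φ m μ₁ μ₂ (g' * v)‖
      = ‖rangeSolver φ m μ₁ μ₂ (g' * v + g * v') - rangeSolver φ m μ₁ μ₂ (g * v')‖ := by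
        rw [← map_sub, add_sub_cancel_right]
    _ ≤ 2 * ‖g * v‖ / |μ₂| + 2 / |μ₁ * μ₂| * ‖g * v'‖ :=
        (norm_sub_le _ _).trans <| add_le_add (hgv.norm_rangeSolver_deriv_le hμ₁ hμ₂)
          (norm_rangeSolver_apply_le φ m _)
    _ ≤ 2 * (‖g‖ * (‖f‖ / |μ₁ * μ₂|)) / |μ₂| +
          2 / |μ₁ * μ₂| * (‖g‖ * (2 * (‖f‖ / |μ₂|))) := by
        gcongr
        · exact (norm_mul_le g v).trans (by gcongr)
        · exact (norm_mul_le g v').trans (by gcongr)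
    _ = 6 * ‖g‖ / |μ₁ * μ₂| / |μ₂| * ‖f‖ := by ring

end RangeSolver

section Asymptotics

lemma tendsto_of_lipschitzWith_of_mem_closure {α X Y : Type*} [PseudoMetricSpace X]
    [PseudoMetricSpace Y] {l : Filter α} {F : α → X → Y} {C : NNReal} {S : Set X} {x : X} {y : Y}
    (hF : ∀ᶠ i in l, LipschitzWith C (F i)) (hS : ∀ z ∈ S, Tendsto (F · z) l (𝓝 y))
    (hx : x ∈ closure S) : Tendsto (F · x) l (𝓝 y) := by
  refine Metric.tendsto_nhds.2 fun δ hδ => ?_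
  obtain ⟨z, hz, hxz⟩ := Metric.mem_closure_iff.1 hx (δ / (2 * (C + 1))) (by positivity)
  filter_upwards [hF, Metric.tendsto_nhds.1 (hS z hz) (δ / 2) (by positivity)] with i hlip hclose
  calc dist (F i x) y ≤ dist (F i x) (F i z) + dist (F i z) y := dist_triangle _ _ _
    _ ≤ C * (δ / (2 * (C + 1))) + dist (F i z) y := by
        gcongr
        exact (hlip.dist_le_mul x z).trans (by gcongr)
    _ < δ / 2 + δ / 2 := by
        refine add_lt_add_of_le_of_lt ?_ hclose
        rw [← mul_div_assoc, div_le_div_iff₀ (by positivity) two_pos]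
        nlinarith [hδ]
    _ = δ := add_halves δ

/-- The functions that are derivatives of continuous functions along the flow `φ`. -/
def flowCoboundaries (𝕜 : Type*) [RCLike 𝕜] {K : Type*} [TopologicalSpace K] [AddCommGroup K]
    (φ : ℝ →ₜ+ K) : Submodule 𝕜 C(K, 𝕜) where
  carrier := {f' | ∃ f, HasFlowDeriv φ f f'}
  add_mem' := fun ⟨_, hf⟩ ⟨_, hg⟩ => ⟨_, hf.add hg⟩
  zero_mem' := ⟨0, fun _ t => hasDerivAt_const t 0⟩
  smul_mem' := fun c _ ⟨_, hf⟩ => ⟨_, hf.const_smul c⟩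

variable {K : Type*} [TopologicalSpace K] [AddCommGroup K] [IsTopologicalAddGroup K]
  [CompactSpace K] [MeasurableSpace K] [BorelSpace K] {φ : ℝ →ₜ+ K} {m : Measure K}
  [IsProbabilityMeasure m] [m.IsAddLeftInvariant] {α : Type*} {l : Filter α} {μ₁ μ₂ : α → ℝ}
  {a : ℝ}

lemma tendsto_rangeSolver_apply (ha : a ≠ 0) (hprod : ∀ᶠ i in l, μ₁ i * μ₂ i = a)
    (hμ₂ : Tendsto (fun i => |μ₂ i|) l atTop) {f : C(K, ℝ)}
    (hf : zeroMeanProj ℝ m f ∈ closure (flowCoboundaries ℝ φ : Set C(K, ℝ))) :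
    Tendsto (fun i => rangeSolver φ m (μ₁ i) (μ₂ i) f) l (𝓝 0) := by
  have hproj : ∀ i, rangeSolver φ m (μ₁ i) (μ₂ i) f =
      rangeSolver φ m (μ₁ i) (μ₂ i) (zeroMeanProj ℝ m f) := fun i => by
    simp only [rangeSolver, ContinuousLinearMap.comp_apply,
      zeroMeanProj_of_mean_eq_zero (mean_zeroMeanProj m f)]
  simp_rw [hproj]
  refine tendsto_of_lipschitzWith_of_mem_closure (C := (2 / |a|).toNNReal)
    (F := fun i => rangeSolver φ m (μ₁ i) (μ₂ i)) ?_ ?_ hf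
  · filter_upwards [hprod] with i hi
    exact (rangeSolver φ m (μ₁ i) (μ₂ i)).lipschitz.weaken <|
      NNReal.le_toNNReal_of_coe_le (hi ▸ norm_rangeSolver_le φ m)
  · rintro G' ⟨G, hG⟩
    refine squeeze_zero_norm' ?_ (hμ₂.const_div_atTop (2 * ‖G‖))
    filter_upwards [hprod] with i hi
    have hne : μ₁ i * μ₂ i ≠ 0 := hi ▸ ha
    exact hG.norm_rangeSolver_deriv_le (left_ne_zero_of_mul hne) (right_ne_zero_of_mul hne)

lemma tendsto_norm_rangeSolver_comp_mul_comp_green (ha : a ≠ 0)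
    (hprod : ∀ᶠ i in l, μ₁ i * μ₂ i = a) (hμ₂ : Tendsto (fun i => |μ₂ i|) l atTop) {g : C(K, ℝ)}
    (hg : g ∈ closure (flowCoboundaries ℝ φ : Set C(K, ℝ))) :
    Tendsto (fun i => ‖rangeSolver φ m (μ₁ i) (μ₂ i) ∘L .mul ℝ C(K, ℝ) g ∘L
      green φ (μ₁ i) (μ₂ i)‖) l (𝓝 0) := by
  refine tendsto_of_lipschitzWith_of_mem_closure (C := (2 / |a| ^ 2).toNNReal)
    (F := fun i g => ‖rangeSolver φ m (μ₁ i) (μ₂ i) ∘L .mul ℝ C(K, ℝ) g ∘L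
      green φ (μ₁ i) (μ₂ i)‖) ?_ ?_ hg
  · filter_upwards [hprod] with i hi
    refine LipschitzWith.of_dist_le_mul fun g₁ g₂ =>
      (abs_norm_sub_norm_le (_ : C(K, ℝ) →L[ℝ] C(K, ℝ)) _).trans ?_
    rw [← ContinuousLinearMap.comp_sub, ← ContinuousLinearMap.sub_comp, ← map_sub, dist_eq_norm,
      Real.coe_toNNReal _ (by positivity), ← hi]
    exact norm_rangeSolver_comp_mul_comp_green_le φ m _
  · rintro G' ⟨G, hG⟩
    refine squeeze_zero' (.of_forall fun i => ContinuousLinearMap.opNorm_nonneg _) ?_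
      (hμ₂.const_div_atTop (6 * ‖G‖ / |a|))
    filter_upwards [hprod] with i hi
    have hne : μ₁ i * μ₂ i ≠ 0 := hi ▸ ha
    rw [← hi]
    exact hG.norm_rangeSolver_comp_mul_deriv_comp_green_le (left_ne_zero_of_mul hne)
      (right_ne_zero_of_mul hne)

lemma tendsto_norm_rangeSolver_comp_mul_sq (ha : a ≠ 0)
    (hprod : ∀ᶠ i in l, μ₁ i * μ₂ i = a) (hμ₂ : Tendsto (fun i => |μ₂ i|) l atTop) {g : C(K, ℝ)}
    (hg : g ∈ closure (flowCoboundaries ℝ φ : Set C(K, ℝ))) :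
    Tendsto (fun i => ‖(rangeSolver φ m (μ₁ i) (μ₂ i) ∘L .mul ℝ C(K, ℝ) g) ^ 2‖) l (𝓝 0) := by
  have hfactor : ∀ i, (rangeSolver φ m (μ₁ i) (μ₂ i) ∘L .mul ℝ C(K, ℝ) g) ^ 2 =
      (rangeSolver φ m (μ₁ i) (μ₂ i) ∘L .mul ℝ C(K, ℝ) g ∘L green φ (μ₁ i) (μ₂ i)) ∘L
        (zeroMeanProj ℝ m ∘L .mul ℝ C(K, ℝ) g) := fun i => sq _
  refine squeeze_zero (fun i => norm_nonneg _) (fun i => ?_)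
    (by simpa using (tendsto_norm_rangeSolver_comp_mul_comp_green (m := m) ha hprod hμ₂
      hg).mul_const ‖zeroMeanProj ℝ m ∘L .mul ℝ C(K, ℝ) g‖)
  rw [hfactor]
  exact ContinuousLinearMap.opNorm_comp_le _ _

end Asymptotics

section OneAdd

variable {A : Type*} [NormedRing A] [NormOneClass A] [HasSummableGeomSeries A]

-- `1 + k` divides `1 - k²`, which is invertible by the Neumann series.
lemma exists_unit_eq_one_add_of_norm_sq_le {k : A} (hk : ‖k ^ 2‖ ≤ 1 / 2) :
    ∃ u : Aˣ, (u : A) = 1 + k ∧ ‖(↑u⁻¹ : A)‖ ≤ 2 * (1 + ‖k‖) := by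
  have hfactor : (1 + k) * (1 - k) = 1 - k ^ 2 := by noncomm_ring
  have hcomm : Commute (1 + k) (1 - k) := by
    rw [Commute, SemiconjBy, hfactor]
    noncomm_ring
  obtain ⟨u, hu⟩ : IsUnit (1 + k) := by
    refine (hcomm.isUnit_mul_iff.1 ?_).1
    rw [hfactor]
    exact (Units.oneSub _ (hk.trans_lt (by norm_num))).isUnit
  refine ⟨u, hu, ?_⟩
  have hinv : (↑u⁻¹ : A) = 1 - k + k ^ 2 * ↑u⁻¹ := by
    rw [← sub_eq_iff_eq_add, ← one_sub_mul, ← hfactor, hcomm.eq, ← hu, Units.mul_inv_cancel_right]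
  have hnorm : ‖(↑u⁻¹ : A)‖ ≤ 1 + ‖k‖ + 1 / 2 * ‖(↑u⁻¹ : A)‖ := by
    calc ‖(↑u⁻¹ : A)‖ ≤ ‖1 - k‖ + ‖k ^ 2 * ↑u⁻¹‖ := by
          conv_lhs => rw [hinv]
          exact norm_add_le _ _
      _ ≤ 1 + ‖k‖ + 1 / 2 * ‖(↑u⁻¹ : A)‖ := by
          gcongr
          · simpa using norm_sub_le 1 k
          · exact (norm_mul_le _ _).trans (by gcongr)
  linarith

end OneAdd

section CharacteristicRoots

/-- The root of `ε μ² - μ + ε a` that stays bounded as `ε → 0`. -/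
noncomputable def slowRoot (a ε : ℝ) : ℝ :=
  (1 - √(1 - 4 * ε ^ 2 * a)) / (2 * ε)

/-- The root of `ε μ² - μ + ε a` that is unbounded as `ε → 0`. -/
noncomputable def fastRoot (a ε : ℝ) : ℝ :=
  (1 + √(1 - 4 * ε ^ 2 * a)) / (2 * ε)

lemma mul_slowRoot_add_fastRoot (a : ℝ) {ε : ℝ} (hε : ε ≠ 0) :
    ε * (slowRoot a ε + fastRoot a ε) = 1 := by
  rw [slowRoot, fastRoot]
  field_simp
  ring

lemma eventually_slowRoot_mul_fastRoot (a : ℝ) :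
    ∀ᶠ ε in 𝓝[≠] 0, slowRoot a ε * fastRoot a ε = a := by
  have hdisc : ∀ᶠ ε : ℝ in 𝓝[≠] 0, 0 ≤ 1 - 4 * ε ^ 2 * a := by
    have hcont : ContinuousAt (fun ε : ℝ => 1 - 4 * ε ^ 2 * a) 0 := by fun_prop
    exact nhdsWithin_le_nhds (hcont.eventually_const_le (by norm_num))
  filter_upwards [hdisc, self_mem_nhdsWithin] with ε hdisc hε
  have hε' : ε ≠ 0 := hε
  have hsq := Real.sq_sqrt hdisc
  rw [slowRoot, fastRoot]
  field_simp
  linear_combination -hsq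

lemma tendsto_abs_fastRoot (a : ℝ) : Tendsto (fun ε => |fastRoot a ε|) (𝓝[≠] 0) atTop := by
  have hinv : Tendsto (fun ε : ℝ => |ε⁻¹| * (1 / 2)) (𝓝[≠] 0) atTop :=
    (tendsto_norm_inv_nhdsNE_zero_atTop (α := ℝ)).atTop_mul_const (by norm_num)
  refine tendsto_atTop_mono (fun ε => ?_) hinv
  have hnum : 1 ≤ |1 + √(1 - 4 * ε ^ 2 * a)| :=
    (le_add_of_nonneg_right (Real.sqrt_nonneg _)).trans (le_abs_self _)
  calc |ε⁻¹| * (1 / 2) = 1 / |2 * ε| := by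
        rw [abs_inv, abs_mul, abs_two]
        ring
    _ ≤ |fastRoot a ε| := by
        rw [fastRoot, abs_div]
        gcongr

end CharacteristicRoots

section RegularZero

open scoped NNReal

variable {X : Type*} [NormedAddCommGroup X] [NormedSpace ℝ X]

/-- A zero of `F` near which `F` is a sufficiently small Lipschitz perturbation of an invertible
continuous linear operator. -/
def IsRegularZero (F : X → X) (U : X) : Prop :=
  F U = 0 ∧ ∃ (B : (X →L[ℝ] X)ˣ) (κ : ℝ≥0), κ * ‖(↑B⁻¹ : X →L[ℝ] X)‖ < 1 ∧
    ∃ s ∈ 𝓝 U, ApproximatesLinearOn F (B : X →L[ℝ] X) s κ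

lemma exists_isRegularZero [CompleteSpace X] {F : X → X} {B : (X →L[ℝ] X)ˣ} {κ C : ℝ≥0} {ρ : ℝ}
    (hρ : 0 < ρ) (hF : ApproximatesLinearOn F (B : X →L[ℝ] X) (Metric.closedBall 0 ρ) κ)
    (hC : 0 < C) (hB : ‖(↑B⁻¹ : X →L[ℝ] X)‖ ≤ C) (hκ : κ * C ≤ 1 / 2)
    (h0 : ‖F 0‖ ≤ ρ / (4 * C)) : ∃ U, IsRegularZero F U := by
  let inverse : ContinuousLinearMap.NonlinearRightInverse (B : X →L[ℝ] X) :=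
    { toFun := (↑B⁻¹ : X →L[ℝ] X)
      nnnorm := C
      bound' := fun y => (↑B⁻¹ : X →L[ℝ] X).le_of_opNorm_le hB y
      right_inv' := fun y => DFunLike.congr_fun B.mul_inv y }
  have hsub : Metric.closedBall (0 : X) (ρ / 2) ⊆ Metric.closedBall 0 ρ :=
    Metric.closedBall_subset_closedBall (by linarith)
  have hκ' : (κ : ℝ) * C ≤ 1 / 2 := mod_cast hκ
  have hradius : ρ / (4 * C) ≤ ((C : ℝ)⁻¹ - κ) * (ρ / 2) := by
    have hC' : (0 : ℝ) < C := hC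
    rw [div_le_iff₀ (by positivity)]
    field_simp
    nlinarith [hκ', hC']
  obtain ⟨U, hU, hU0⟩ := hF.surjOn_closedBall_of_nonlinearRightInverse inverse (by positivity) hsub
    (show (0 : X) ∈ _ by simpa using h0.trans hradius)
  refine ⟨U, hU0, B, κ, ?_, _, ?_, hF⟩
  · calc κ * ‖(↑B⁻¹ : X →L[ℝ] X)‖ ≤ κ * C := by gcongr
      _ < 1 := by linarith
  · refine mem_of_superset (Metric.isOpen_ball.mem_nhds ?_) Metric.ball_subset_closedBall
    exact Metric.closedBall_subset_ball (half_lt_self hρ) hU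

end RegularZero

section Superposition

open scoped NNReal

variable {K : Type*} [TopologicalSpace K] [AddCommGroup K] [IsTopologicalAddGroup K]

/-- The superposition operator `v ↦ H (v ·, · + θ)` on continuous functions. -/
def superpose (H : C(ℝ × K, ℝ)) (θ : K) (v : C(K, ℝ)) : C(K, ℝ) :=
  ⟨fun y => H (v y, y + θ), by fun_prop⟩

@[simp]
lemma superpose_apply (H : C(ℝ × K, ℝ)) (θ : K) (v : C(K, ℝ)) (y : K) :
    superpose H θ v y = H (v y, y + θ) :=
  rfl

lemma superpose_zero_const (H : C(ℝ × K, ℝ)) (x : ℝ) :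
    superpose H 0 (.const K x) = H.curry x := by
  ext y
  simp

lemma translate_superpose (H : C(ℝ × K, ℝ)) (θ : K) (v : C(K, ℝ)) :
    translate θ (superpose H 0 v) = superpose H θ (translate θ v) := by
  ext y
  simp

lemma continuous_superpose [CompactSpace K] (H : C(ℝ × K, ℝ)) (θ : K) :
    Continuous (superpose H θ) :=
  continuous_of_continuous_uncurry _ <| by
    simp only [Function.uncurry_def, superpose_apply]
    fun_prop

lemma hasStrictFDerivAt_superpose [CompactSpace K] {H Hx : C(ℝ × K, ℝ)}
    (hHx : ∀ x y, HasDerivAt (fun x => H (x, y)) (Hx (x, y)) x) (θ : K) (v : C(K, ℝ)) :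
    HasStrictFDerivAt (superpose H θ) (ContinuousLinearMap.mul ℝ C(K, ℝ) (superpose Hx θ v)) v := by
  refine .of_isLittleO (Asymptotics.isLittleO_iff.mpr fun κ hκ => ?_)
  obtain ⟨r, hr, hball⟩ :=
    Metric.continuousAt_iff.mp ((continuous_superpose Hx θ).continuousAt (x := v)) κ hκ
  filter_upwards [prod_mem_nhds (Metric.ball_mem_nhds v hr) (Metric.ball_mem_nhds v hr)]
    with ⟨w₁, w₂⟩ ⟨hw₁, hw₂⟩
  rw [ContinuousMap.norm_le _ (by positivity)]
  intro y
  have hline : ∀ t : ℝ, HasDerivAt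
      (fun t => H (w₂ y + t * (w₁ - w₂) y, y + θ) - t * (Hx (v y, y + θ) * (w₁ - w₂) y))
      ((Hx (w₂ y + t * (w₁ - w₂) y, y + θ) - Hx (v y, y + θ)) * (w₁ - w₂) y) t := fun t => by
    have harg := ((hasDerivAt_id t).mul_const ((w₁ - w₂) y)).const_add (w₂ y)
    refine (((hHx _ (y + θ)).comp t harg).sub ((hasDerivAt_id t).mul_const _)).congr_deriv ?_
    simp only [id_eq]
    ring
  have hbound : ∀ t ∈ Ico (0 : ℝ) 1,
      ‖(Hx (w₂ y + t * (w₁ - w₂) y, y + θ) - Hx (v y, y + θ)) * (w₁ - w₂) y‖ ≤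
        κ * ‖w₁ - w₂‖ := fun t ht => by
    have hmem := (convex_ball v r).add_smul_sub_mem hw₂ hw₁ (Ico_subset_Icc_self ht)
    have hnear := (dist_apply_le_dist y).trans (hball hmem).le
    rw [norm_mul]
    gcongr
    · simpa [Real.dist_eq] using hnear
    · exact norm_coe_le_norm _ y
  simpa [sub_right_comm] using norm_image_sub_le_of_norm_deriv_le_segment_01'
    (fun t _ => (hline t).hasDerivWithinAt) hbound

lemma closedBall_half_subset_preimage_const_add {K : Type*} [TopologicalSpace K] [CompactSpace K]
    {b c ρ : ℝ} (hb : b ∈ Metric.closedBall c (ρ / 2)) :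
    Metric.closedBall (0 : C(K, ℝ)) (ρ / 2) ⊆
      (ContinuousMap.const K b + ·) ⁻¹' Metric.closedBall (.const K c) ρ := by
  intro v hv
  rw [mem_closedBall_zero_iff] at hv
  rw [Metric.mem_closedBall, Real.dist_eq] at hb
  have hρ : 0 ≤ ρ := by linarith [abs_nonneg (b - c)]
  rw [mem_preimage, Metric.mem_closedBall, ContinuousMap.dist_le hρ]
  intro y
  calc dist ((ContinuousMap.const K b + v) y) (ContinuousMap.const K c y) = |b - c + v y| := by
        rw [Real.dist_eq, ContinuousMap.add_apply, const_apply, const_apply, add_sub_right_comm]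
    _ ≤ |b - c| + ‖v‖ := (abs_add_le _ _).trans (by gcongr; exact norm_coe_le_norm v y)
    _ ≤ ρ := by linarith

lemma exists_approximatesLinearOn_superpose [CompactSpace K] {H Hx : C(ℝ × K, ℝ)}
    (hHx : ∀ x y, HasDerivAt (fun x => H (x, y)) (Hx (x, y)) x) (c : ℝ) {κ : ℝ≥0} (hκ : 0 < κ) :
    ∃ ρ > 0, ApproximatesLinearOn (superpose H 0)
      (ContinuousLinearMap.mul ℝ C(K, ℝ) (Hx.curry c)) (Metric.closedBall (.const K c) ρ) κ := by
  obtain ⟨s, hs, happrox⟩ :=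
    (hasStrictFDerivAt_superpose hHx 0 (.const K c)).approximates_deriv_on_nhds (.inr hκ)
  obtain ⟨ρ, hρ, hsub⟩ := Metric.nhds_basis_closedBall.mem_iff.mp hs
  rw [superpose_zero_const] at happrox
  exact ⟨ρ, hρ, happrox.mono_set hsub⟩

end Superposition

section Residual

open scoped NNReal

variable {K : Type*} [TopologicalSpace K] [AddCommGroup K] [IsTopologicalAddGroup K]
  [CompactSpace K] [MeasurableSpace K] [BorelSpace K] {φ : ℝ →ₜ+ K} {m : Measure K}
  [IsProbabilityMeasure m]

variable (φ m) in
/-- The defect of `v` in the fixed point form of the range equation at base point `b`, for the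
nonlinearity `H (·, · + θ)`. The linear part `(μ₁ * μ₂) • v` of the nonlinearity is absorbed into
`rangeSolver`, and for `μ₁ + μ₂ = ε⁻¹` the zeros solve the equation with parameter `ε`. -/
noncomputable def residual (μ₁ μ₂ : ℝ) (H : C(ℝ × K, ℝ)) (b : ℝ) (θ : K) (v : C(K, ℝ)) : C(K, ℝ) :=
  v + rangeSolver φ m μ₁ μ₂ (superpose H θ (.const K b + v) - (μ₁ * μ₂) • v)

variable {μ₁ μ₂ b : ℝ} {H Hx : C(ℝ × K, ℝ)}

lemma residual_zero : residual φ m μ₁ μ₂ H b 0 0 = rangeSolver φ m μ₁ μ₂ (H.curry b) := by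
  simp only [residual, zero_add, add_zero, smul_zero, sub_zero, superpose_zero_const]

lemma translate_residual [m.IsAddLeftInvariant] (θ : K) (v : C(K, ℝ)) :
    translate θ (residual φ m μ₁ μ₂ H b 0 v) = residual φ m μ₁ μ₂ H b θ (translate θ v) := by
  have hconst : translate θ (.const K b + v) = .const K b + translate θ v := rfl
  have hsub : translate θ (superpose H 0 (.const K b + v) - (μ₁ * μ₂) • v) =
      superpose H θ (.const K b + translate θ v) - (μ₁ * μ₂) • translate θ v := by
    rw [← hconst, ← translate_superpose]
    rfl
  rw [residual, translate_add, translate_rangeSolver, hsub, residual]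

lemma approximatesLinearOn_residual {k : C(K, ℝ)} {s : Set C(K, ℝ)} {κ : ℝ≥0} {θ : K}
    (hs : ApproximatesLinearOn (superpose H θ) (ContinuousLinearMap.mul ℝ C(K, ℝ) k) s κ) :
    ApproximatesLinearOn (residual φ m μ₁ μ₂ H b θ)
      (1 + rangeSolver φ m μ₁ μ₂ ∘L .mul ℝ C(K, ℝ) (k - (μ₁ * μ₂) • 1))
      ((ContinuousMap.const K b + ·) ⁻¹' s) (‖rangeSolver φ m μ₁ μ₂‖₊ * κ) := by
  intro v hv w hw
  have hdiff : residual φ m μ₁ μ₂ H b θ v - residual φ m μ₁ μ₂ H b θ w -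
      (1 + rangeSolver φ m μ₁ μ₂ ∘L .mul ℝ C(K, ℝ) (k - (μ₁ * μ₂) • 1)) (v - w) =
      rangeSolver φ m μ₁ μ₂ (superpose H θ (.const K b + v) - superpose H θ (.const K b + w) -
        k * ((.const K b + v) - (.const K b + w))) := by
    have hlinear : (1 + rangeSolver φ m μ₁ μ₂ ∘L .mul ℝ C(K, ℝ) (k - (μ₁ * μ₂) • 1)) (v - w) =
        (v - w) + rangeSolver φ m μ₁ μ₂ ((k - (μ₁ * μ₂) • 1) * (v - w)) := rfl
    rw [hlinear, add_sub_add_left_eq_sub, sub_mul, smul_mul_assoc, one_mul]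
    simp only [residual, map_sub, map_smul]
    module
  rw [hdiff]
  calc ‖_‖ ≤ ‖rangeSolver φ m μ₁ μ₂‖ * ‖superpose H θ (.const K b + v) -
        superpose H θ (.const K b + w) - k * ((.const K b + v) - (.const K b + w))‖ :=
        ContinuousLinearMap.le_opNorm _ _
    _ ≤ ‖rangeSolver φ m μ₁ μ₂‖ * (κ * ‖(.const K b + v) - (.const K b + w)‖) := by
        gcongr
        exact hs _ hv _ hw
    _ = _ := by
        rw [add_sub_add_left_eq_sub, ← mul_assoc]
        rfl

lemma exists_flowDeriv_of_residual_eq_zero [m.IsAddLeftInvariant] (hμ : μ₁ * μ₂ ≠ 0) {ε : ℝ}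
    (hε : ε * (μ₁ + μ₂) = 1) {U : C(K, ℝ)} (hU : residual φ m μ₁ μ₂ H b 0 U = 0) :
    mean ℝ m U = 0 ∧ ∃ (U' U'' : C(K, ℝ)) (R : ℝ), HasFlowDeriv φ U U' ∧ HasFlowDeriv φ U' U'' ∧
      ∀ y, ε * U'' y + U' y + ε * H (b + U y, y) = ε * R := by
  obtain ⟨hμ₁, hμ₂⟩ := mul_ne_zero_iff.mp hμ
  set N := superpose H 0 (.const K b + U) - (μ₁ * μ₂) • U with hN
  have hfixed : U = rangeSolver φ m μ₁ μ₂ (-N) := by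
    rw [map_neg]
    exact eq_neg_of_add_eq_zero_left hU
  set f := zeroMeanProj ℝ m (-N) with hf
  have hgreen : green φ μ₁ μ₂ f = U := hfixed.symm
  refine ⟨by rw [hfixed, mean_rangeSolver hμ₁ hμ₂], resolvent φ μ₂ f - μ₁ • green φ μ₁ μ₂ f, _,
    mean ℝ m N, hgreen ▸ hasFlowDeriv_green hμ₁ f, hasFlowDeriv_flowDeriv_green hμ₁ hμ₂ f, ?_⟩
  intro y
  have hfy : f y = mean ℝ m N - H (b + U y, y) + μ₁ * μ₂ * U y := by
    simp only [hf, zeroMeanProj_apply, map_neg, hN, ContinuousMap.sub_apply,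
      ContinuousMap.neg_apply, ContinuousMap.smul_apply, ContinuousMap.one_apply,
      ContinuousMap.add_apply, superpose_apply, const_apply, add_zero, smul_eq_mul]
    ring
  simp only [hgreen, ContinuousMap.sub_apply, ContinuousMap.smul_apply, smul_eq_mul, hfy]
  linear_combination (-(resolvent φ μ₂ f y - μ₁ * U y)) * hε

end Residual

section Existence

open scoped NNReal

variable {K : Type*} [TopologicalSpace K] [AddCommGroup K] [IsTopologicalAddGroup K]
  [CompactSpace K] [MeasurableSpace K] [BorelSpace K] {φ : ℝ →ₜ+ K} {m : Measure K}
  [IsProbabilityMeasure m] [m.IsAddLeftInvariant] {α : Type*} {l : Filter α} {μ₁ μ₂ : α → ℝ}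
  {a : ℝ}

lemma eventually_exists_unit_eq_one_add_rangeSolver_comp_mul (ha : a ≠ 0)
    (hprod : ∀ᶠ i in l, μ₁ i * μ₂ i = a) (hμ₂ : Tendsto (fun i => |μ₂ i|) l atTop) {g : C(K, ℝ)}
    (hg : g ∈ closure (flowCoboundaries ℝ φ : Set C(K, ℝ))) :
    ∀ᶠ i in l, ∃ B : (C(K, ℝ) →L[ℝ] C(K, ℝ))ˣ,
      (B : C(K, ℝ) →L[ℝ] C(K, ℝ)) = 1 + rangeSolver φ m (μ₁ i) (μ₂ i) ∘L .mul ℝ C(K, ℝ) g ∧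
      ‖(↑B⁻¹ : C(K, ℝ) →L[ℝ] C(K, ℝ))‖ ≤ 2 * (1 + 2 / |a| * ‖g‖) := by
  have hsquare := tendsto_norm_rangeSolver_comp_mul_sq (m := m) ha hprod hμ₂ hg
  filter_upwards [hprod, hsquare.eventually_le_const (by norm_num : (0 : ℝ) < 1 / 2)]
    with i hi hsq
  obtain ⟨B, hB, hBinv⟩ := exists_unit_eq_one_add_of_norm_sq_le (A := C(K, ℝ) →L[ℝ] C(K, ℝ)) hsq
  refine ⟨B, hB, hBinv.trans ?_⟩
  gcongr
  refine (ContinuousLinearMap.opNorm_comp_le _ _).trans ?_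
  gcongr
  · exact hi ▸ norm_rangeSolver_le φ m
  · exact ContinuousLinearMap.opNorm_mul_apply_le ℝ C(K, ℝ) g

lemma tendsto_rangeSolver_curry (ha : a ≠ 0)
    (hprod : ∀ᶠ i in l, μ₁ i * μ₂ i = a) (hμ₂ : Tendsto (fun i => |μ₂ i|) l atTop)
    (H : C(ℝ × K, ℝ)) {c : ℝ}
    (hH : zeroMeanProj ℝ m (H.curry c) ∈ closure (flowCoboundaries ℝ φ : Set C(K, ℝ))) :
    Tendsto (fun p : α × ℝ => rangeSolver φ m (μ₁ p.1) (μ₂ p.1) (H.curry p.2)) (l ×ˢ 𝓝 c)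
      (𝓝 0) := by
  have hbase : Tendsto (fun p : α × ℝ => rangeSolver φ m (μ₁ p.1) (μ₂ p.1) (H.curry c))
      (l ×ˢ 𝓝 c) (𝓝 0) := (tendsto_rangeSolver_apply ha hprod hμ₂ hH).comp tendsto_fst
  have hincrement : Tendsto (fun p : α × ℝ => 2 / |a| * ‖H.curry p.2 - H.curry c‖)
      (l ×ˢ 𝓝 c) (𝓝 0) := by
    have hcont : Tendsto (fun x => 2 / |a| * ‖H.curry x - H.curry c‖) (𝓝 c)
        (𝓝 (2 / |a| * ‖H.curry c - H.curry c‖)) := Continuous.tendsto (by fun_prop) c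
    rw [sub_self, norm_zero, mul_zero] at hcont
    exact hcont.comp tendsto_snd
  have hsmall : Tendsto
      (fun p : α × ℝ => rangeSolver φ m (μ₁ p.1) (μ₂ p.1) (H.curry p.2 - H.curry c))
      (l ×ˢ 𝓝 c) (𝓝 0) := by
    refine squeeze_zero_norm' ?_ hincrement
    filter_upwards [hprod.prod_inl (𝓝 c)] with p hp
    exact hp ▸ norm_rangeSolver_apply_le φ m _
  simpa only [map_sub, add_sub_cancel, add_zero] using hbase.add hsmall

lemma eventually_exists_isRegularZero_residual (ha : a ≠ 0)
    (hprod : ∀ᶠ i in l, μ₁ i * μ₂ i = a) (hμ₂ : Tendsto (fun i => |μ₂ i|) l atTop)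
    (hdense : ∀ f : C(K, ℝ), zeroMeanProj ℝ m f ∈ closure (flowCoboundaries ℝ φ : Set C(K, ℝ)))
    {H Hx : C(ℝ × K, ℝ)} (hHx : ∀ x y, HasDerivAt (fun x => H (x, y)) (Hx (x, y)) x) {c : ℝ}
    (hmean : mean ℝ m (Hx.curry c) = a) :
    ∀ᶠ p in l ×ˢ 𝓝 c,
      ∃ U, IsRegularZero (residual φ m (μ₁ p.1) (μ₂ p.1) H p.2 0) U := by
  set g := zeroMeanProj ℝ m (Hx.curry c) with hg
  set C : ℝ≥0 := 2 * (1 + 2 / ‖a‖₊ * ‖g‖₊)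
  have hCpos : 0 < C := by positivity
  set κ : ℝ≥0 := ‖a‖₊ / (4 * C) with hκ
  have hκpos : 0 < κ := by have := nnnorm_pos.mpr ha; positivity
  obtain ⟨ρ, hρ, hlin⟩ := exists_approximatesLinearOn_superpose hHx c hκpos
  have hunit := eventually_exists_unit_eq_one_add_rangeSolver_comp_mul (m := m) ha hprod hμ₂
    (hdense (Hx.curry c))
  have hresidual := (tendsto_rangeSolver_curry ha hprod hμ₂ H (hdense (H.curry c))).norm
  rw [norm_zero] at hresidual
  have hnear : ∀ᶠ b in 𝓝 c, b ∈ Metric.closedBall c (ρ / 2) :=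
    Metric.closedBall_mem_nhds c (half_pos hρ)
  filter_upwards [hunit.prod_inl _, hprod.prod_inl _, hnear.prod_inr _,
    hresidual.eventually_le_const (by positivity : 0 < ρ / 2 / (4 * C))]
    with p ⟨B, hB, hBinv⟩ hp hball hsmall
  have hT : ‖rangeSolver φ m (μ₁ p.1) (μ₂ p.1)‖₊ ≤ 2 / ‖a‖₊ := hp ▸ norm_rangeSolver_le φ m
  have happrox := (approximatesLinearOn_residual (φ := φ) (m := m) (μ₁ := μ₁ p.1) (μ₂ := μ₂ p.1)
    hlin).mono_set (closedBall_half_subset_preimage_const_add hball)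
  rw [hp, ← hmean, ← zeroMeanProj_apply, ← hg, ← hB] at happrox
  refine exists_isRegularZero (half_pos hρ) happrox hCpos hBinv ?_ (by rwa [residual_zero])
  calc ‖rangeSolver φ m (μ₁ p.1) (μ₂ p.1)‖₊ * κ * C ≤ 2 / ‖a‖₊ * κ * C := by gcongr
    _ = 1 / 2 := by
      have := nnnorm_ne_zero_iff.mpr ha
      rw [hκ]
      field_simp
      norm_num

end Existence

section ImplicitFunction

open scoped ContDiff

variable {E X : Type*} [NormedAddCommGroup E] [NormedSpace ℝ E] [NormedAddCommGroup X]
  [NormedSpace ℝ X] [CompleteSpace X]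

lemma IsRegularZero.isUnit_of_hasFDerivAt {F : X → X} {F' : X →L[ℝ] X} {U : X}
    (hU : IsRegularZero F U) (hF : HasFDerivAt F F' U) : IsUnit F' := by
  obtain ⟨-, B, κ, hκ, s, hs, hlip⟩ := hU
  have hnorm : ‖F' - B‖ ≤ κ :=
    (hF.sub B.val.hasFDerivAt).le_of_lipschitzOn hs hlip.lipschitzOnWith
  rcases (norm_nonneg (↑B⁻¹ : X →L[ℝ] X)).eq_or_lt' with hzero | hpos
  · have : Subsingleton (X →L[ℝ] X) := by
      refine subsingleton_of_zero_eq_one ?_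
      rw [← B.inv_mul, norm_eq_zero.mp hzero, zero_mul]
    exact isUnit_of_subsingleton F'
  · refine (B.ofNearby F' (hnorm.trans_lt ?_)).isUnit
    rwa [← one_div, lt_div_iff₀ hpos]

lemma IsRegularZero.analyticAt_of_family [CompleteSpace E] {Φ : E × X → X} {u : E → X} {e : E}
    (hreg : IsRegularZero (fun v => Φ (e, v)) (u e)) (hΦ : AnalyticAt ℝ Φ (e, u e))
    (hu : ContinuousAt u e) (hzero : ∀ᶠ e' in 𝓝 e, Φ (e', u e') = 0) : AnalyticAt ℝ u e := by
  have hinv : (fderiv ℝ Φ (e, u e) ∘L .inr ℝ E X).IsInvertible := by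
    obtain ⟨B, hB⟩ := hreg.isUnit_of_hasFDerivAt
      (hΦ.differentiableAt.hasFDerivAt.comp (u e) (hasFDerivAt_prodMk_right e (u e)))
    exact ⟨ContinuousLinearEquiv.unitsEquiv ℝ X B, hB⟩
  have hsmooth : ContDiffAt ℝ ω Φ (e, u e) := hΦ.contDiffAt
  have hω : (ω : ℕ∞ω) ≠ 0 := by simp
  refine (hsmooth.contDiffAt_implicitFunction hω hinv).analyticAt.congr ?_
  filter_upwards [(continuousAt_id.prodMk hu).eventually
    (hsmooth.eventually_apply_eq_iff_implicitFunction hω hinv), hzero] with e' hiff he'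
  exact hiff.mp (he'.trans hreg.1.symm)

end ImplicitFunction

section Composition

variable {K : Type*} [TopologicalSpace K] [CompactSpace K]

/-- The superposition operators on `C(K, E)` of the homogeneous terms of a power series on `E`. -/
noncomputable def pointwiseSeries (K : Type*) [TopologicalSpace K] [CompactSpace K]
    {E F : Type*} [NormedAddCommGroup E] [NormedSpace ℝ E] [NormedAddCommGroup F] [NormedSpace ℝ F]
    (p : FormalMultilinearSeries ℝ E F) : FormalMultilinearSeries ℝ C(K, E) C(K, F) := fun n =>
  MultilinearMap.mkContinuous
    { toFun := fun w => ⟨fun y => p n fun i => w i y, by fun_prop⟩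
      map_update_add' := fun w i a b => by
        ext y
        simp [Function.apply_update fun _ (f : C(K, E)) => f y]
      map_update_smul' := fun w i c a => by
        ext y
        simp [Function.apply_update fun _ (f : C(K, E)) => f y] }
    ‖p n‖ fun w => by
      rw [ContinuousMap.norm_le _ (by positivity)]
      intro y
      refine ((p n).le_opNorm _).trans ?_
      gcongr with i
      exact (w i).norm_coe_le_norm y

section

variable {E F : Type*} [NormedAddCommGroup E] [NormedSpace ℝ E] [NormedAddCommGroup F]
  [NormedSpace ℝ F]

lemma radius_le_radius_pointwiseSeries (p : FormalMultilinearSeries ℝ E F) :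
    p.radius ≤ (pointwiseSeries K p).radius := by
  refine ENNReal.le_of_forall_nnreal_lt fun r hr => ?_
  obtain ⟨C, -, hC⟩ := p.norm_mul_pow_le_of_lt_radius hr
  refine (pointwiseSeries K p).le_radius_of_bound C fun n => ?_
  exact (mul_le_mul_of_nonneg_right (MultilinearMap.mkContinuous_norm_le _ (norm_nonneg _) _)
    (by positivity)).trans (hC n)

lemma hasFPowerSeriesOnBall_comp_left [CompleteSpace F] {g : C(E, F)}
    {p : FormalMultilinearSeries ℝ E F} {x : E} {r : ENNReal} (hg : HasFPowerSeriesOnBall g p x r) :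
    HasFPowerSeriesOnBall (fun w : C(K, E) => g.comp w) (pointwiseSeries K p) (.const K x) r where
  r_le := hg.r_le.trans (radius_le_radius_pointwiseSeries p)
  r_pos := hg.r_pos
  hasSum {w} hw := by
    have hradius := hg.r_le.trans (radius_le_radius_pointwiseSeries (K := K) p)
    have hsum := (pointwiseSeries K p).hasSum (Metric.eball_subset_eball hradius hw)
    convert hsum
    ext y
    have hwy : w y ∈ Metric.eball (0 : E) r := by
      rw [Metric.mem_eball, edist_zero_right] at hw ⊢
      exact lt_of_le_of_lt (enorm_le_iff_norm_le.mpr (w.norm_coe_le_norm y)) hw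
    exact (hg.hasSum hwy).unique (hsum.mapL (evalCLM ℝ y))

lemma exists_eventuallyEq_norm_sub_const_le (w : C(K, E)) (y : K) {δ : ℝ} (hδ : 0 < δ) :
    ∃ w' : C(K, E), ‖w' - .const K (w y)‖ ≤ δ ∧ w' =ᶠ[𝓝 y] w := by
  have hmax : ∀ t, 0 < max δ t := fun t => lt_max_of_lt_left hδ
  refine ⟨⟨fun z => (δ / max δ ‖w z - w y‖) • (w z - w y) + w y, ?_⟩, ?_, ?_⟩
  · fun_prop (disch := exact fun _ => (hmax _).ne')
  · rw [ContinuousMap.norm_le _ hδ.le]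
    intro z
    have := hmax ‖w z - w y‖
    simp only [ContinuousMap.sub_apply, coe_mk, const_apply, add_sub_cancel_right, norm_smul,
      norm_div, Real.norm_of_nonneg hδ.le, Real.norm_of_nonneg this.le]
    rw [div_mul_comm]
    exact mul_le_of_le_one_left hδ.le (div_le_one_of_le₀ (le_max_right _ _) this.le)
  · filter_upwards [w.continuous.continuousAt.eventually (Metric.closedBall_mem_nhds (w y) hδ)]
      with z hz
    replace hz : ‖w z - w y‖ ≤ δ := by rwa [← dist_eq_norm]
    simp [max_eq_left hz, hδ.ne']

end

lemma analyticAt_of_local [T2Space K] {V : Type*} [NormedAddCommGroup V] [NormedSpace ℝ V]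
    {F : V → C(K, ℝ)} {v : V} (hF : ∀ y : K, ∃ G : V → C(K, ℝ), AnalyticAt ℝ G v ∧
      ∀ᶠ y' in 𝓝 y, ∀ v', F v' y' = G v' y') : AnalyticAt ℝ F v := by
  choose G hG hFG using hF
  obtain ⟨t, ht⟩ := isCompact_univ.elim_nhds_subcover _ fun y _ => interior_mem_nhds.mpr (hFG y)
  obtain ⟨ρ, hρ⟩ := PartitionOfUnity.exists_isSubordinate isClosed_univ
    (fun i : t => interior {y' | ∀ v', F v' y' = G i v' y'}) (fun i => isOpen_interior)
    (ht.2.trans (iUnion₂_subset fun y hy => subset_iUnion_of_subset ⟨y, hy⟩ subset_rfl))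
  have hsum : AnalyticAt ℝ
      (fun v' => ∑ i : t, ContinuousLinearMap.mul ℝ C(K, ℝ) (ρ i) (G i v')) v :=
    Finset.univ.analyticAt_fun_sum fun i _ =>
      (ContinuousLinearMap.analyticAt _ _).fun_comp (hG i)
  convert hsum using 2 with v'
  ext y
  have hterm : ∀ i : t, ρ i y * G i v' y = ρ i y * F v' y := fun i => by
    by_cases hy : y ∈ tsupport (ρ i)
    · rw [interior_subset (hρ i hy) v']
    · rw [image_eq_zero_of_notMem_tsupport hy, zero_mul, zero_mul]
  simp only [ContinuousLinearMap.mul_apply', ContinuousMap.sum_apply, ContinuousMap.mul_apply,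
    hterm, ← Finset.sum_mul]
  rw [← finsum_eq_sum_of_fintype, ρ.sum_eq_one (mem_univ y), one_mul]

lemma analyticAt_comp_left [T2Space K] {E : Type*} [NormedAddCommGroup E] [NormedSpace ℝ E]
    {g : C(E, ℝ)} (w : C(K, E)) (hg : ∀ y, AnalyticAt ℝ g (w y)) :
    AnalyticAt ℝ (fun w' : C(K, E) => g.comp w') w := by
  refine analyticAt_of_local fun y => ?_
  obtain ⟨p, r, hp⟩ := hg y
  obtain ⟨δ, hδ, hδr⟩ := ENNReal.lt_iff_exists_nnreal_btwn.mp hp.r_pos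
  obtain ⟨w', hw', heq⟩ := exists_eventuallyEq_norm_sub_const_le w y (NNReal.coe_pos.mpr
    (ENNReal.coe_pos.mp hδ))
  refine ⟨fun v => g.comp (v - w + w'), ?_, heq.mono fun z hz v => by simp [hz]⟩
  have hmem : w' ∈ Metric.eball (.const K (w y)) r := by
    rw [Metric.mem_eball, edist_eq_enorm_sub]
    exact lt_of_le_of_lt (enorm_le_coe.mpr hw') hδr
  refine AnalyticAt.fun_comp (g := fun v : C(K, E) => g.comp v) ?_
    ((analyticAt_id.sub analyticAt_const).add analyticAt_const)
  simpa using (hasFPowerSeriesOnBall_comp_left hp).analyticAt_of_mem hmem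

end Composition

section Regularity

variable {K : Type*} [TopologicalSpace K] [AddCommGroup K] [IsTopologicalAddGroup K]
  [CompactSpace K] [T2Space K] {E : Type*} [NormedAddCommGroup E] [NormedSpace ℝ E]
  {q : E →ₜ+ K} {H : C(ℝ × K, ℝ)}

lemma analyticAt_superpose (hq : ∀ y, ∃ σ : C(K, E), ∀ᶠ y' in 𝓝 y, q (σ y') = y')
    (hH : ∀ z, AnalyticAt ℝ (fun z : ℝ × E => H (z.1, q z.2)) z) (z : E × C(K, ℝ)) :
    AnalyticAt ℝ (fun z => superpose H (q z.1) z.2) z := by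
  refine analyticAt_of_local fun y => ?_
  obtain ⟨σ, hσ⟩ := hq y
  let g : C(ℝ × E, ℝ) := ⟨fun z => H (z.1, q z.2), by fun_prop⟩
  let L : E × C(K, ℝ) →L[ℝ] C(K, ℝ × E) :=
    (ContinuousLinearMap.inl ℝ ℝ E).compLeftContinuous ℝ K ∘L .snd ℝ E C(K, ℝ) +
      ContinuousLinearMap.const ℝ K ∘L .inr ℝ ℝ E ∘L .fst ℝ E C(K, ℝ)
  refine ⟨fun z => g.comp (L z + (ContinuousMap.const K 0).prodMk σ), ?_, ?_⟩
  · exact (analyticAt_comp_left _ fun y => hH _).fun_comp (L.analyticAt z |>.add analyticAt_const)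
  · filter_upwards [hσ] with y' hy' z
    simp [g, L, hy', add_comm]

variable [MeasurableSpace K] [BorelSpace K] {m : Measure K} [IsProbabilityMeasure m]
  {φ : ℝ →ₜ+ K} {μ₁ μ₂ b : ℝ}

lemma analyticAt_residual (hq : ∀ y, ∃ σ : C(K, E), ∀ᶠ y' in 𝓝 y, q (σ y') = y')
    (hH : ∀ z, AnalyticAt ℝ (fun z : ℝ × E => H (z.1, q z.2)) z) (z : E × C(K, ℝ)) :
    AnalyticAt ℝ (fun z => residual φ m μ₁ μ₂ H b (q z.1) z.2) z := by
  have hsup : AnalyticAt ℝ (fun z : E × C(K, ℝ) => superpose H (q z.1) (.const K b + z.2)) z :=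
    (analyticAt_superpose hq hH _).fun_comp
      (f := fun z : E × C(K, ℝ) => (z.1, .const K b + z.2))
      (analyticAt_fst.prod (analyticAt_const.add analyticAt_snd))
  exact analyticAt_snd.add <| (ContinuousLinearMap.analyticAt _ _).fun_comp <|
    hsup.sub (analyticAt_const.fun_smul analyticAt_snd)

lemma IsRegularZero.analyticAt_comp [m.IsAddLeftInvariant] [CompleteSpace E] {U : C(K, ℝ)}
    (hU : IsRegularZero (residual φ m μ₁ μ₂ H b 0) U)
    (hq : ∀ y, ∃ σ : C(K, E), ∀ᶠ y' in 𝓝 y, q (σ y') = y')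
    (hH : ∀ z, AnalyticAt ℝ (fun z : ℝ × E => H (z.1, q z.2)) z) (ψ : E) :
    AnalyticAt ℝ (fun ψ => U (q ψ)) ψ := by
  have htranslate_zero : translate 0 U = U := by
    ext y
    simp
  have htranslate : AnalyticAt ℝ (fun θ : E => translate (q θ) U) 0 := by
    refine IsRegularZero.analyticAt_of_family
      (Φ := fun z => residual φ m μ₁ μ₂ H b (q z.1) z.2) ?_ (analyticAt_residual hq hH _)
      ((continuous_translate U).comp q.continuous).continuousAt (.of_forall fun θ => ?_)
    · simpa only [map_zero, htranslate_zero] using hU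
    · rw [← translate_residual, hU.1]
      rfl
  have heq : (fun ψ' => U (q ψ')) = fun ψ' => evalCLM ℝ (q ψ) (translate (q (ψ' - ψ)) U) := by
    ext ψ'
    simp
  rw [heq]
  refine (ContinuousLinearMap.analyticAt _ _).fun_comp (AnalyticAt.fun_comp
    (g := fun θ => translate (q θ) U) ?_ (analyticAt_id.sub analyticAt_const))
  simpa using htranslate

end Regularity

section Torus

variable {ι : Type*}

/-- The covering `ℝ^ι → (ℝ/ℤ)^ι`, `ψ ↦ ψ / 2π`, of the torus by angle coordinates. -/
noncomputable def torusMk (ι : Type*) : (ι → ℝ) →ₜ+ UnitAddTorus ι where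
  toFun ψ i := (ψ i / (2 * Real.pi) : ℝ)
  map_zero' := by
    ext i
    simp
  map_add' ψ ψ' := by
    ext i
    simp [add_div]
  continuous_toFun := continuous_pi fun i =>
    (AddCircle.continuous_mk' 1).comp ((continuous_apply i).div_const _)

lemma torusMk_apply (ψ : ι → ℝ) (i : ι) :
    torusMk ι ψ i = ((ψ i / (2 * Real.pi) : ℝ) : UnitAddCircle) :=
  rfl

lemma isOpenQuotientMap_torusMk [Finite ι] : IsOpenQuotientMap (torusMk ι) :=
  IsOpenQuotientMap.piMap fun _ => (QuotientAddGroup.isOpenQuotientMap_mk (G := ℝ)).comp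
    (Homeomorph.mulRight₀ (2 * Real.pi)⁻¹ (by positivity)).isOpenQuotientMap

/-- The linear flow `t ↦ ωt` on the torus. -/
noncomputable def torusFlow (ω : ι → ℝ) : ℝ →ₜ+ UnitAddTorus ι :=
  (torusMk ι).comp (ContinuousLinearMap.toSpanSingleton ℝ ω : ℝ →ₜ+ ι → ℝ)

lemma torusFlow_apply (ω : ι → ℝ) (t : ℝ) : torusFlow ω t = torusMk ι (t • ω) :=
  rfl

lemma torusMk_single [DecidableEq ι] (i : ι) : torusMk ι (Pi.single i (2 * Real.pi)) = 0 := by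
  ext j
  rw [torusMk_apply]
  obtain rfl | hij := eq_or_ne j i <;> simp [*]

lemma eq_of_torusMk_eq [Finite ι] [DecidableEq ι] {Y : Type*} {F : (ι → ℝ) → Y}
    (hF : ∀ i, Function.Periodic F (Pi.single i (2 * Real.pi))) {ψ ψ' : ι → ℝ}
    (h : torusMk ι ψ = torusMk ι ψ') : F ψ = F ψ' := by
  cases nonempty_fintype ι
  have hcoord : ∀ i, ∃ n : ℤ, n • (2 * Real.pi) = ψ i - ψ' i := fun i => by
    have hi := congrFun h i
    rw [torusMk_apply, torusMk_apply, ← sub_eq_zero, ← AddCircle.coe_sub,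
      AddCircle.coe_eq_zero_iff] at hi
    obtain ⟨n, hn⟩ := hi
    refine ⟨n, ?_⟩
    rwa [zsmul_eq_mul, mul_one, ← sub_div, eq_div_iff (by positivity), ← zsmul_eq_mul] at hn
  choose n hn using hcoord
  have hperiod : Function.Periodic F (∑ i, n i • Pi.single i (2 * Real.pi)) :=
    Finset.sum_induction _ (Function.Periodic F) (fun _ _ => .add_period) (by simp)
      fun i _ => (hF i).zsmul (n i)
  have hsum : ∑ i, n i • Pi.single i (2 * Real.pi) = ψ - ψ' := by
    simp only [← Pi.single_smul, hn]
    exact Finset.univ_sum_single (ψ - ψ')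
  rw [← hperiod ψ', hsum, add_sub_cancel]

lemma exists_lift_torus [Finite ι] [DecidableEq ι] {X Y : Type*} [TopologicalSpace X]
    [TopologicalSpace Y] {F : X → (ι → ℝ) → Y} (hF : Continuous (Function.uncurry F))
    (hper : ∀ x i, Function.Periodic (F x) (Pi.single i (2 * Real.pi))) :
    ∃ G : C(X × UnitAddTorus ι, Y), ∀ x ψ, G (x, torusMk ι ψ) = F x ψ := by
  let p : C(X × (ι → ℝ), X × UnitAddTorus ι) := (ContinuousMap.id X).prodMap (torusMk ι)
  have hp : IsQuotientMap p :=
    (IsOpenQuotientMap.id.prodMap isOpenQuotientMap_torusMk).isQuotientMap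
  have hfactor : Function.FactorsThrough (⟨Function.uncurry F, hF⟩ : C(_, Y)) p := by
    rintro ⟨x, ψ⟩ ⟨x', ψ'⟩ h
    obtain ⟨rfl, hψ⟩ := Prod.mk.inj h
    exact eq_of_torusMk_eq (hper x) hψ
  exact ⟨hp.lift _ hfactor, fun x ψ => DFunLike.congr_fun (hp.lift_comp _ hfactor) (x, ψ)⟩

lemma fourier_coe_div_two_pi (n : ℤ) (x : ℝ) :
    fourier n ((x / (2 * Real.pi) : ℝ) : UnitAddCircle) = Complex.exp (n * x * Complex.I) := by
  rw [fourier_coe_apply]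
  congr 1
  push_cast
  field_simp

lemma exists_local_section_torusMk [Finite ι] (y : UnitAddTorus ι) :
    ∃ σ : C(UnitAddTorus ι, ι → ℝ), ∀ᶠ y' in 𝓝 y, torusMk ι (σ y') = y' := by
  cases nonempty_fintype ι
  obtain ⟨ψ₀, rfl⟩ := isOpenQuotientMap_torusMk.surjective y
  let σ : C(UnitAddTorus ι, ι → ℝ) :=
    ⟨fun y' i => ψ₀ i + Real.arcsin (fourier 1 (y' i - torusMk ι ψ₀ i)).im, by fun_prop⟩
  have hσ : ∀ ψ ∈ Metric.ball ψ₀ (Real.pi / 2), σ (torusMk ι ψ) = ψ := fun ψ hψ => by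
    ext i
    have hdist : |ψ i - ψ₀ i| < Real.pi / 2 := (dist_le_pi_dist ψ ψ₀ i).trans_lt hψ
    obtain ⟨hlower, hupper⟩ := abs_lt.mp hdist
    have him : (fourier 1 (torusMk ι ψ i - torusMk ι ψ₀ i)).im = Real.sin (ψ i - ψ₀ i) := by
      rw [torusMk_apply, torusMk_apply, ← AddCircle.coe_sub, ← sub_div, fourier_coe_div_two_pi,
        Int.cast_one, one_mul, Complex.exp_ofReal_mul_I_im]
    change ψ₀ i + Real.arcsin _ = ψ i
    rw [him, Real.arcsin_sin hlower.le hupper.le, add_sub_cancel]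
  refine ⟨σ, ?_⟩
  filter_upwards [isOpenQuotientMap_torusMk.isOpenMap.image_mem_nhds
    (Metric.ball_mem_nhds ψ₀ Real.pi_div_two_pos)]
  rintro _ ⟨ψ, hψ, rfl⟩
  rw [hσ ψ hψ]

end Torus

section TorusMeasure

open Pointwise in
lemma inv_smul_Icc_zero_const {ι : Type*} {r : ℝ} (hr : 0 < r) :
    r⁻¹ • Icc (0 : ι → ℝ) (fun _ => r) = Icc 0 fun _ => 1 := by
  ext x
  simp only [mem_inv_smul_set_iff₀ hr.ne', mem_Icc, Pi.le_def, Pi.smul_apply, smul_eq_mul,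
    Pi.zero_apply, mul_nonneg_iff_of_pos_left hr, mul_le_iff_le_one_right hr]

variable {ι : Type*} [Fintype ι]

/-- The normalized Haar measure on the torus. -/
noncomputable def torusHaar (ι : Type*) [Fintype ι] : Measure (UnitAddTorus ι) :=
  Measure.pi fun _ => AddCircle.haarAddCircle

instance : IsProbabilityMeasure (torusHaar ι) := by
  unfold torusHaar
  infer_instance

instance : (torusHaar ι).IsAddLeftInvariant := by
  unfold torusHaar
  infer_instance

lemma integral_torusHaar_eq_unitCube (f : UnitAddTorus ι → ℝ) :
    ∫ y, f y ∂torusHaar ι =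
      ∫ x in Icc (0 : ι → ℝ) fun _ => 1, f fun i => (x i : UnitAddCircle) := by
  have hcube : {x : ι → ℝ | ∀ i, x i ∈ Ioc ((0 : ι → ℝ) i) ((0 : ι → ℝ) i + 1)} =ᵐ[volume]
      Icc (0 : ι → ℝ) fun _ => 1 := by
    simp only [Pi.zero_apply, zero_add, ← mem_univ_pi, ofPred_mem_eq]
    exact Measure.univ_pi_Ioc_ae_eq_Icc
  exact (UnitAddTorus.integral_preimage f 0).trans (setIntegral_congr_set hcube)

lemma integral_torusHaar (f : UnitAddTorus ι → ℝ) :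
    ∫ y, f y ∂torusHaar ι = ((2 * Real.pi) ^ Fintype.card ι)⁻¹ *
      ∫ ψ in Icc (0 : ι → ℝ) fun _ => 2 * Real.pi, f (torusMk ι ψ) := by
  have hscale := Measure.setIntegral_comp_smul (volume : Measure (ι → ℝ))
    (fun x => f fun i => (x i : UnitAddCircle)) (Icc 0 fun _ => 2 * Real.pi)
    (inv_ne_zero Real.two_pi_pos.ne')
  have hmk : ∀ ψ : ι → ℝ, torusMk ι ψ = fun i => ((((2 * Real.pi)⁻¹ • ψ) i : ℝ) : UnitAddCircle) :=
    fun ψ => by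
      ext i
      rw [torusMk_apply, Pi.smul_apply, smul_eq_mul, div_eq_inv_mul]
  have hpow : (0 : ℝ) < (2 * Real.pi) ^ Fintype.card ι := by positivity
  rw [inv_smul_Icc_zero_const Real.two_pi_pos, ← integral_torusHaar_eq_unitCube, inv_pow, inv_inv,
    Module.finrank_fintype_fun_eq_card, abs_of_pos hpow, smul_eq_mul] at hscale
  simp only [hmk, hscale, inv_mul_cancel_left₀ hpow.ne']

end TorusMeasure

section Nonresonance

variable {ι : Type*} [Fintype ι] {ω : ι → ℝ}

lemma mFourier_add_torusFlow (ω : ι → ℝ) (ν : ι → ℤ) (y : UnitAddTorus ι) (t : ℝ) :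
    UnitAddTorus.mFourier ν (y + torusFlow ω t) =
      UnitAddTorus.mFourier ν y * Complex.exp (t * ((∑ i, ω i * ν i : ℝ) * Complex.I)) := by
  have hcoord : ∀ i, fourier (ν i) ((y + torusFlow ω t) i) =
      fourier (ν i) (y i) * Complex.exp (t * (ω i * ν i * Complex.I)) := fun i => by
    rw [Pi.add_apply, fourier_apply, zsmul_add, AddCircle.toCircle_add, Circle.coe_mul,
      ← fourier_apply, ← fourier_apply, torusFlow_apply, torusMk_apply, fourier_coe_div_two_pi]
    congr 2
    push_cast [Pi.smul_apply, smul_eq_mul]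
    ring
  simp only [UnitAddTorus.mFourier, ContinuousMap.coe_mk, hcoord, Finset.prod_mul_distrib,
    ← Complex.exp_sum, ← Finset.mul_sum, ← Finset.sum_mul]
  push_cast
  rfl

lemma hasFlowDeriv_mFourier (ω : ι → ℝ) (ν : ι → ℤ) :
    HasFlowDeriv (torusFlow ω) (UnitAddTorus.mFourier ν)
      (((∑ i, ω i * ν i : ℝ) * Complex.I) • UnitAddTorus.mFourier ν) := fun y t => by
  have hexp : HasDerivAt (fun s : ℝ => (s : ℂ) * ((∑ i, ω i * ν i : ℝ) * Complex.I))
      ((∑ i, ω i * ν i : ℝ) * Complex.I) t := by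
    simpa using (Complex.ofRealCLM.hasDerivAt (x := t)).mul_const _
  simp only [ContinuousMap.smul_apply, smul_eq_mul, mFourier_add_torusFlow]
  exact (hexp.cexp.const_mul _).congr_deriv (by ring)

lemma mFourier_mem_flowCoboundaries {ν : ι → ℤ} (hν : ∑ i, ω i * (ν i : ℝ) ≠ 0) :
    UnitAddTorus.mFourier ν ∈ flowCoboundaries ℂ (torusFlow ω) := by
  have hν' : ((∑ i, ω i * ν i : ℝ) : ℂ) * Complex.I ≠ 0 :=
    mul_ne_zero (Complex.ofReal_ne_zero.mpr hν) Complex.I_ne_zero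
  rw [← Submodule.smul_mem_iff _ hν']
  exact ⟨_, hasFlowDeriv_mFourier ω ν⟩

lemma zeroMeanProj_mFourier_mem_flowCoboundaries
    (hω : ∀ ν : ι → ℤ, ν ≠ 0 → ∑ i, ω i * (ν i : ℝ) ≠ 0) (ν : ι → ℤ) :
    zeroMeanProj ℂ (torusHaar ι) (UnitAddTorus.mFourier ν) ∈ flowCoboundaries ℂ (torusFlow ω) := by
  obtain rfl | hν := eq_or_ne ν 0
  · rw [UnitAddTorus.mFourier_zero, zeroMeanProj_apply, mean_one, one_smul, sub_self]
    exact zero_mem _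
  · obtain ⟨f, hf⟩ := mFourier_mem_flowCoboundaries (hω ν hν)
    rw [zeroMeanProj_of_mean_eq_zero hf.mean_eq_zero]
    exact ⟨f, hf⟩

lemma zeroMeanProj_mem_closure_flowCoboundaries_complex
    (hω : ∀ ν : ι → ℤ, ν ≠ 0 → ∑ i, ω i * (ν i : ℝ) ≠ 0) (f : C(UnitAddTorus ι, ℂ)) :
    zeroMeanProj ℂ (torusHaar ι) f ∈
      closure (flowCoboundaries ℂ (torusFlow ω) : Set C(UnitAddTorus ι, ℂ)) := by
  have hf : f ∈ closure (Submodule.span ℂ (range (UnitAddTorus.mFourier (d := ι))) :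
      Set C(UnitAddTorus ι, ℂ)) := by
    rw [← Submodule.topologicalClosure_coe, UnitAddTorus.span_mFourier_closure_eq_top]
    trivial
  have hspan : Submodule.span ℂ (range (UnitAddTorus.mFourier (d := ι))) ≤
      (flowCoboundaries ℂ (torusFlow ω)).comap (zeroMeanProj ℂ (torusHaar ι)).toLinearMap :=
    Submodule.span_le.mpr
      (range_subset_iff.mpr (zeroMeanProj_mFourier_mem_flowCoboundaries hω))
  exact map_mem_closure (zeroMeanProj ℂ (torusHaar ι)).continuous hf hspan

lemma zeroMeanProj_mem_closure_flowCoboundaries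
    (hω : ∀ ν : ι → ℤ, ν ≠ 0 → ∑ i, ω i * (ν i : ℝ) ≠ 0) (f : C(UnitAddTorus ι, ℝ)) :
    zeroMeanProj ℝ (torusHaar ι) f ∈
      closure (flowCoboundaries ℝ (torusFlow ω) : Set C(UnitAddTorus ι, ℝ)) := by
  let re : C(UnitAddTorus ι, ℂ) →L[ℝ] C(UnitAddTorus ι, ℝ) :=
    Complex.reCLM.compLeftContinuous ℝ _
  let fc : C(UnitAddTorus ι, ℂ) := (Complex.ofRealCLM : C(ℝ, ℂ)).comp f
  have hre : re (zeroMeanProj ℂ (torusHaar ι) fc) = zeroMeanProj ℝ (torusHaar ι) f := by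
    ext y
    have hmean : mean ℂ (torusHaar ι) fc = (mean ℝ (torusHaar ι) f : ℂ) := integral_ofReal
    simp [zeroMeanProj_apply, hmean, re, fc]
  rw [← hre]
  exact map_mem_closure re.continuous (zeroMeanProj_mem_closure_flowCoboundaries_complex hω fc)
    fun _ ⟨_, hg⟩ => ⟨_, hg.continuousLinearMap_comp Complex.reCLM⟩

end Nonresonance

section Averaging

variable {K : Type*} [TopologicalSpace K] [AddCommGroup K] [IsTopologicalAddGroup K]
  [CompactSpace K] [MeasurableSpace K] [BorelSpace K]

lemma hasDerivAt_mean_curry (m : Measure K) [IsProbabilityMeasure m] {H Hx : C(ℝ × K, ℝ)}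
    (hHx : ∀ x y, HasDerivAt (fun x => H (x, y)) (Hx (x, y)) x) (c : ℝ) :
    HasDerivAt (fun x => mean ℝ m (H.curry x)) (mean ℝ m (Hx.curry c)) c := by
  have hconst_eq : (fun x : ℝ => const K x) = fun x => x • 1 := by
    ext x y
    simp
  have hconst : HasDerivAt (fun x : ℝ => const K x) 1 c := by
    rw [hconst_eq]
    simpa using (hasDerivAt_id c).smul_const (1 : C(K, ℝ))
  have hsuperpose := (hasStrictFDerivAt_superpose hHx 0 (const K c)).hasFDerivAt.comp_hasDerivAt
    c hconst
  simpa [Function.comp_def, superpose_zero_const] using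
    (mean ℝ m).hasFDerivAt.comp_hasDerivAt c hsuperpose

end Averaging

section Solution

variable {ι : Type*}

lemma HasFlowDeriv.hasDerivAt_torusMk {ω : ι → ℝ} {U U' : C(UnitAddTorus ι, ℝ)}
    (hU : HasFlowDeriv (torusFlow ω) U U') (t : ℝ) :
    HasDerivAt (fun s : ℝ => U (torusMk ι (s • ω))) (U' (torusMk ι (t • ω))) t := by
  simpa only [zero_add, torusFlow_apply] using hU 0 t

lemma HasFlowDeriv.deriv_const_add_torusMk {ω : ι → ℝ} {U U' : C(UnitAddTorus ι, ℝ)}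
    (hU : HasFlowDeriv (torusFlow ω) U U') (b : ℝ) :
    deriv (fun s : ℝ => b + U (torusMk ι (s • ω))) = fun t => U' (torusMk ι (t • ω)) :=
  funext fun t => ((hU.hasDerivAt_torusMk t).const_add b).deriv

variable [Fintype ι]

lemma exists_lift_torus_hasDerivAt [DecidableEq ι] {h : ℝ → (ι → ℝ) → ℝ}
    (hh : ContDiff ℝ 1 (Function.uncurry h))
    (hper : ∀ x i, Function.Periodic (h x) (Pi.single i (2 * Real.pi))) :
    ∃ H Hx : C(ℝ × UnitAddTorus ι, ℝ), (∀ x ψ, H (x, torusMk ι ψ) = h x ψ) ∧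
      ∀ x y, HasDerivAt (fun x => H (x, y)) (Hx (x, y)) x := by
  let hx (x : ℝ) (ψ : ι → ℝ) : ℝ := fderiv ℝ (Function.uncurry h) (x, ψ) (1, 0)
  have hderiv : ∀ x ψ, HasDerivAt (fun x => h x ψ) (hx x ψ) x := fun x ψ =>
    HasFDerivAt.comp_hasDerivAt (l := Function.uncurry h) x
      (hh.differentiable one_ne_zero (x, ψ)).hasFDerivAt
      ((hasDerivAt_id' x).prodMk (hasDerivAt_const x ψ))
  have hxcont : Continuous (Function.uncurry hx) :=
    (hh.continuous_fderiv one_ne_zero).clm_apply continuous_const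
  have hxper : ∀ x i, Function.Periodic (hx x) (Pi.single i (2 * Real.pi)) := fun x i ψ => by
    have hshift := hderiv x (ψ + Pi.single i (2 * Real.pi))
    simp only [hper _ i ψ] at hshift
    exact hshift.unique (hderiv x ψ)
  obtain ⟨H, hH⟩ := exists_lift_torus hh.continuous hper
  obtain ⟨Hx, hHx⟩ := exists_lift_torus hxcont hxper
  refine ⟨H, Hx, hH, fun x y => ?_⟩
  obtain ⟨ψ, rfl⟩ := isOpenQuotientMap_torusMk.surjective y
  simpa only [hH, hHx] using hderiv x ψ

lemma exists_isRegularZero_torus {ω : ι → ℝ}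
    (hω : ∀ ν : ι → ℤ, ν ≠ 0 → ∑ i, ω i * (ν i : ℝ) ≠ 0) {H Hx : C(ℝ × UnitAddTorus ι, ℝ)}
    (hHx : ∀ x y, HasDerivAt (fun x => H (x, y)) (Hx (x, y)) x) {a c : ℝ} (ha : a ≠ 0)
    (hmean : mean ℝ (torusHaar ι) (Hx.curry c) = a) :
    ∃ εb > 0, ∃ ζb > 0, ∀ ε : ℝ, 0 < |ε| → |ε| < εb → ∀ ζ : ℝ, |ζ| < ζb →
      slowRoot a ε * fastRoot a ε = a ∧ ∃ U, IsRegularZero (residual (torusFlow ω) (torusHaar ι)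
        (slowRoot a ε) (fastRoot a ε) H (c + ζ) 0) U := by
  have hsolve : ∀ᶠ p in 𝓝[≠] 0 ×ˢ 𝓝 c, slowRoot a p.1 * fastRoot a p.1 = a ∧
      ∃ U, IsRegularZero (residual (torusFlow ω) (torusHaar ι)
        (slowRoot a p.1) (fastRoot a p.1) H p.2 0) U :=
    ((eventually_slowRoot_mul_fastRoot a).prod_inl _).and
      (eventually_exists_isRegularZero_residual ha (eventually_slowRoot_mul_fastRoot a)
        (tendsto_abs_fastRoot a) (zeroMeanProj_mem_closure_flowCoboundaries hω) hHx hmean)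
  have hbasis := (nhdsWithin_hasBasis (Metric.nhds_basis_ball (x := (0 : ℝ))) {0}ᶜ).prod
    (Metric.nhds_basis_ball (x := c))
  obtain ⟨⟨εb, ζb⟩, ⟨hεb, hζb⟩, hsub⟩ := hbasis.eventually_iff.mp hsolve
  refine ⟨εb, hεb, ζb, hζb, fun ε hε0 hε ζ hζ => hsub (x := (ε, c + ζ)) ⟨⟨?_, ?_⟩, ?_⟩⟩
  · simpa using hε
  · simpa using hε0
  · simpa using hζ

end Solution

end RangeEquation

open RangeEquation in
theorem range_equation_solvable_general_general {ι : Type*} [Fintype ι] [DecidableEq ι]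
    {ω : ι → ℝ} (hω : ∀ ν : ι → ℤ, ν ≠ 0 → ∑ i, ω i * (ν i : ℝ) ≠ 0)
    {h : ℝ → (ι → ℝ) → ℝ} (hh : ∀ p, AnalyticAt ℝ (fun q : ℝ × (ι → ℝ) => h q.1 q.2) p)
    (hhper : ∀ x ψ i, h x (ψ + Pi.single i (2 * Real.pi)) = h x ψ) {h₀ : ℝ → ℝ}
    (hh₀ : ∀ x, h₀ x = ((2 * Real.pi) ^ Fintype.card ι)⁻¹ *
      ∫ ψ in Set.Icc (0 : ι → ℝ) (fun _ => 2 * Real.pi), h x ψ)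
    {c : ℝ} (ha : deriv h₀ c ≠ 0) :
    ∃ εb > (0 : ℝ), ∃ ζb > (0 : ℝ), ∀ ε : ℝ, 0 < |ε| → |ε| < εb → ∀ ζ : ℝ, |ζ| < ζb →
      ∃ (u : (ι → ℝ) → ℝ) (R : ℝ), (∀ ψ, AnalyticAt ℝ u ψ) ∧
        (∀ ψ i, u (ψ + Pi.single i (2 * Real.pi)) = u ψ) ∧
        ((2 * Real.pi) ^ Fintype.card ι)⁻¹ *
          (∫ ψ in Set.Icc (0 : ι → ℝ) (fun _ => 2 * Real.pi), u ψ) = 0 ∧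
        ∀ t : ℝ, ε * deriv (deriv fun s : ℝ => c + ζ + u (s • ω)) t +
          deriv (fun s : ℝ => c + ζ + u (s • ω)) t + ε * h (c + ζ + u (t • ω)) (t • ω) = ε * R := by
  obtain ⟨H, Hx, hH, hHx⟩ := exists_lift_torus_hasDerivAt
    (contDiff_iff_contDiffAt.mpr fun p => (hh p).contDiffAt) fun x i ψ => hhper x ψ i
  have hh₀_eq : h₀ = fun x => mean ℝ (torusHaar ι) (H.curry x) := by
    ext x
    simp only [mean_apply, integral_torusHaar, hh₀, ContinuousMap.curry_apply, hH]
  have hmean : mean ℝ (torusHaar ι) (Hx.curry c) = deriv h₀ c := by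
    rw [hh₀_eq, (hasDerivAt_mean_curry _ hHx c).deriv]
  obtain ⟨εb, hεb, ζb, hζb, hsolve⟩ := exists_isRegularZero_torus hω hHx ha hmean
  refine ⟨εb, hεb, ζb, hζb, fun ε hε0 hε ζ hζ => ?_⟩
  obtain ⟨hprod, U, hU⟩ := hsolve ε hε0 hε ζ hζ
  obtain ⟨hUmean, U', U'', R, hU', hU'', heq⟩ :=
    exists_flowDeriv_of_residual_eq_zero (hprod.trans_ne ha)
      (mul_slowRoot_add_fastRoot _ (abs_pos.mp hε0)) hU.1
  refine ⟨fun ψ => U (torusMk ι ψ), R, ?_, fun ψ i => ?_, ?_, fun t => ?_⟩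
  · exact hU.analyticAt_comp exists_local_section_torusMk (by simpa only [hH] using hh)
  · simp only [map_add, torusMk_single, add_zero]
  · rw [← integral_torusHaar, ← mean_apply, hUmean]
  · rw [hU'.deriv_const_add_torusMk, (hU''.hasDerivAt_torusMk t).deriv, ← hH]
    exact heq _

/-- **Solvability of the range equation for `ε x'' + x' + ε h(x, ωt) = 0`.**
For nonresonant `ω`, `h` real analytic and `2π`-periodic in each of the last `d`
coordinates, with `h₀(c₀) = 0` and `a := h₀'(c₀) ≠ 0`, there are `ε̄, ζ̄ > 0` such that
for every `0 < |ε| < ε̄` and every `|ζ| < ζ̄` there exist a real analytic, periodic,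
zero-mean `u` and a constant `R` such that `x(t) = c₀ + ζ + u(ωt)` satisfies
`ε x'' + x' + ε h(x, ωt) = ε R` for all `t`. -/
theorem range_equation_solvable_general
    (d : ℕ) (hd : 1 ≤ d) (ω : Fin d → ℝ)
    (hω : ∀ ν : Fin d → ℤ, ν ≠ 0 → (∑ i, ω i * (ν i : ℝ)) ≠ 0)
    (h : ℝ → (Fin d → ℝ) → ℝ)
    (hh : ∀ p : ℝ × (Fin d → ℝ), AnalyticAt ℝ (fun q : ℝ × (Fin d → ℝ) => h q.1 q.2) p)
    (hhper : ∀ (x : ℝ) (ψ : Fin d → ℝ) (i : Fin d),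
      h x (ψ + Pi.single i (2 * Real.pi)) = h x ψ)
    (h₀ : ℝ → ℝ)
    (hh₀ : ∀ x : ℝ, h₀ x = ((2 * Real.pi) ^ d)⁻¹ *
      ∫ ψ in Set.Icc (0 : Fin d → ℝ) (fun _ => 2 * Real.pi), h x ψ)
    (c₀ : ℝ) (hzero : h₀ c₀ = 0) (ha : deriv h₀ c₀ ≠ 0) :
    ∃ εb > (0 : ℝ), ∃ ζb > (0 : ℝ),
      ∀ ε : ℝ, 0 < |ε| → |ε| < εb → ∀ ζ : ℝ, |ζ| < ζb →
        ∃ (u : (Fin d → ℝ) → ℝ) (R : ℝ),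
          (∀ ψ : Fin d → ℝ, AnalyticAt ℝ u ψ) ∧
          (∀ (ψ : Fin d → ℝ) (i : Fin d), u (ψ + Pi.single i (2 * Real.pi)) = u ψ) ∧
          (((2 * Real.pi) ^ d)⁻¹ *
            ∫ ψ in Set.Icc (0 : Fin d → ℝ) (fun _ => 2 * Real.pi), u ψ) = 0 ∧
          (∀ t : ℝ,
            ε * deriv (deriv (fun s : ℝ => c₀ + ζ + u (s • ω))) t
              + deriv (fun s : ℝ => c₀ + ζ + u (s • ω)) t
              + ε * h (c₀ + ζ + u (t • ω)) (t • ω)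
              = ε * R) := by
  simpa only [Fintype.card_fin] using
    range_equation_solvable_general_general hω hh hhper (by simpa only [Fintype.card_fin]) ha
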